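/- There exist universal constants C₁, C₂, C₃ > 0 such that the following holds. Let A > 0, and let K ≥ 2, λ ≥ 1, m ≥ 257 be integers with M := λm. Set β := K(λ+1)/(λ+2), δ := (λ+2)A/K, ε_V := √(2m)·β^{−(λ−1)}·δ, and let V and w_m be as defined below. Let Δ ≥ 4/(m−1) and let μ = Σ_{j=1}^S a_j δ_{t_j} be an atomic measure on 𝕋 with Δ(μ) ≥ Δ and ‖μ‖_TV ≤ A. Let q ∈ ℂ^M satisfy ‖V(𝓕_M μ) − Vq‖_2 ≤ ε_V, and let ν = Σ_{k=1}^{S̃} b_k δ_{s_k} be an atomic measure minimizing ‖ν'‖_TV among all atomic measures ν' with ‖Vq − 𝓕_m ν'‖_2 ≤ ε_V. Then the reweighted measure μ̃ := Σ_{k=1}^{S̃} (b_k / w_m(s_k)) δ_{s_k} satisfies: 𝓔_1^m(μ,μ̃) ≤ C₁·A·M^{1/2}·λ^{1/2}·K^{−λ} + C₁·(1 + M^{1/2}λ^{1/2}K^{−λ})^{1/2}·A·M^{1/4}·λ^{5/4}·K^{−λ/2}; 𝓔_2^m(μ,μ̃) ≤ C₂·A·λ·K^{−λ}; and 𝓔_3^m(μ,μ̃)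 ≤ C₃·A·M^{1/2}·λ^{1/2}·K^{−λ}. -/

import Mathlib

open scoped Real
open Complex

noncomputable section

/-- Wrap-around distance on `ℝ` (distance to the nearest integer). -/
def distT (t : ℝ) : ℝ := ⨅ n : ℤ, |t - (n : ℝ)|

/-- Euclidean norm of a complex vector. -/
def norm2 {n : ℕ} (y : Fin n → ℂ) : ℝ := Real.sqrt (∑ i, ‖y i‖ ^ 2)

/-- Total variation norm of the atomic measure with amplitudes `a`. -/
def tvNorm {R : ℕ} (a : Fin R → ℂ) : ℝ := ∑ j, ‖a j‖

/-- First `M` Fourier coefficients of the atomic measure `∑ j, a j • δ_{t j}`. -/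
def fourierCoeffs (M : ℕ) {R : ℕ} (a : Fin R → ℂ) (t : Fin R → ℝ) : Fin M → ℂ :=
  fun k => ∑ j, a j * Complex.exp (-2 * (Real.pi : ℂ) * Complex.I * ((k : ℕ) : ℂ) * ((t j : ℝ) : ℂ))

/-- The function `w(t) = ∑_{k<λ} β^{-k} e^{-2πikt}`. -/
def wFun (β : ℝ) (lam : ℕ) (t : ℝ) : ℂ :=
  ∑ k ∈ Finset.range lam, ((β : ℂ))⁻¹ ^ k * Complex.exp (-2 * (Real.pi : ℂ) * Complex.I * (k : ℂ) * (t : ℂ))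

/-- Condensation matrix `V = [I_m, β⁻¹ I_m, …, β^{-(λ-1)} I_m]`. -/
def Vmat (β : ℝ) (m lam : ℕ) : Matrix (Fin m) (Fin (lam * m)) ℂ :=
  Matrix.of fun i j => if (j : ℕ) % m = (i : ℕ) then ((β : ℂ))⁻¹ ^ ((j : ℕ) / m) else 0

/-- Noise-shaping matrix `H` with `1` on the diagonal and `-β` on the `m`-th subdiagonal. -/
def Hmat (β : ℝ) (m M : ℕ) : Matrix (Fin M) (Fin M) ℂ :=
  Matrix.of fun j k => if (j : ℕ) = (k : ℕ) then 1 else if (j : ℕ) = (k : ℕ) + m then -(β : ℂ) else 0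

/-- `𝒵_K = {-K+1, -K+3, …, K-1}`. -/
def ZK (K : ℕ) : Set ℤ := {n | ∃ k : ℕ, k < K ∧ n = -(K : ℤ) + 1 + 2 * (k : ℤ)}

/-- The Cartesian alphabet `𝒜 = δ(𝒵_K + i𝒵_K)`. -/
def alphabet (K : ℕ) (δ : ℝ) : Set ℂ :=
  {z | ∃ a b : ℤ, a ∈ ZK K ∧ b ∈ ZK K ∧ z = (δ : ℂ) * ((a : ℂ) + (b : ℂ) * Complex.I)}

/-- `L` is a Lipschitz bound for `φ` with respect to the wrap-around distance. -/
def LipBnd (φ : ℝ → ℂ) (L : ℝ) : Prop := ∀ s t : ℝ, ‖φ s - φ t‖ ≤ L * distT (s - t)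

/-- Lipschitz seminorm `|φ|_Lip` with respect to the wrap-around distance. -/
def lipSemi (φ : ℝ → ℂ) : ℝ := sInf {L : ℝ | 0 ≤ L ∧ LipBnd φ L}

/-- Sup norm of `φ`. -/
def supNorm (φ : ℝ → ℂ) : ℝ := sSup {x : ℝ | ∃ t : ℝ, x = ‖φ t‖}

/-- Lipschitz norm `‖φ‖_Lip = max(‖φ‖_∞, |φ|_Lip)`. -/
def lipNorm (φ : ℝ → ℂ) : ℝ := max (supNorm φ) (lipSemi φ)

/-- Dual Lipschitz norm `‖ρ‖_{Lip*}` of the atomic measure `ρ = ∑ j, u j • δ_{r j}`. -/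
def lipStar {R : ℕ} (u : Fin R → ℂ) (r : Fin R → ℝ) : ℝ :=
  sSup {x : ℝ | ∃ φ : ℝ → ℂ, lipNorm φ ≤ 1 ∧ x = ‖∑ j, u j * φ (r j)‖}

/-- `𝓔_Lip(ρ,ν)` for atomic measures. -/
def ELip {R S : ℕ} (u : Fin R → ℂ) (r : Fin R → ℝ) (v : Fin S → ℂ) (s : Fin S → ℝ) : ℝ :=
  sSup {x : ℝ | ∃ φ : ℝ → ℂ, lipNorm φ ≤ 1 ∧
    x = ‖(∑ j, u j * φ (r j)) - (∑ k, v k * φ (s k))‖}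

open scoped Classical in
/-- The neighborhood index set `𝓘_j^M`. -/
def nearIdx {R S : ℕ} (r : Fin R → ℝ) (s : Fin S → ℝ) (M : ℕ) (j : Fin R) : Finset (Fin S) :=
  Finset.univ.filter fun k => distT (r j - s k) ≤ 0.3298 / ((M : ℝ) - 1)

open scoped Classical in
/-- The residual index set `𝓘_0^M`. -/
def farIdx {R S : ℕ} (r : Fin R → ℝ) (s : Fin S → ℝ) (M : ℕ) : Finset (Fin S) :=
  Finset.univ.filter fun k => ∀ j : Fin R, k ∉ nearIdx r s M j

/-- Amplitude error `𝓔_1^M(ρ,ν)`. -/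
def E1 {R S : ℕ} (u : Fin R → ℂ) (r : Fin R → ℝ) (v : Fin S → ℂ) (s : Fin S → ℝ) (M : ℕ) : ℝ :=
  ⨆ j : Fin R, ‖u j - ∑ k ∈ nearIdx r s M j, v k‖

/-- Support error `𝓔_2^M(ρ,ν)`. -/
def E2 {R S : ℕ} (u : Fin R → ℂ) (r : Fin R → ℝ) (v : Fin S → ℂ) (s : Fin S → ℝ) (M : ℕ) : ℝ :=
  ∑ j : Fin R, ∑ k ∈ nearIdx r s M j, ‖v k‖ * distT (r j - s k) ^ 2

/-- Spurious-atom error `𝓔_3^M(ρ,ν)`. -/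
def E3 {R S : ℕ} (u : Fin R → ℂ) (r : Fin R → ℝ) (v : Fin S → ℂ) (s : Fin S → ℝ) (M : ℕ) : ℝ :=
  ∑ k ∈ farIdx r s M, ‖v k‖

/-- Mixed `ℓ∞ + ℓ²` error `𝓔^π_{∞,2}(ρ,ν)` for a permutation `π`. -/
def EInf2 {S : ℕ} (u : Fin S → ℂ) (r : Fin S → ℝ) (v : Fin S → ℂ) (s : Fin S → ℝ)
    (σ : Equiv.Perm (Fin S)) : ℝ :=
  (⨆ j, distT (r j - s (σ j))) +
    Real.sqrt (∑ j, ‖u j - v (σ j)‖ ^ 2) / Real.sqrt (∑ j, ‖u j‖ ^ 2)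

end

/-!
At nodes separated by `4 / (m - 1)`, Hermite interpolation with the fourth power of the Dirichlet
kernel is well conditioned: its kernel sums are dominated by the diagonal. Any prescribed values of
modulus at most `1` are therefore attained at the nodes by a trigonometric polynomial of degree
less than `m` which is bounded by `1`, drops quadratically from the nodes, stays strictly below `1`
away from them and has `ℓ²`-bounded coefficients.

The matrix `V` sums geometric blocks, so `V 𝓕_M μ = 𝓕_m (w_m μ)`, and `w_m μ` competes with `ν` in
the minimization. Pairing `ν - w_m μ` with such a dual certificate bounds the mass of `ν` far from
the nodes and its second moment near them by the data error. Averaging two certificates with equal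
values at one node and opposite values at the others isolates that node, which gives the amplitude
error. Since `w_m` is bounded below and is Lipschitz with constant `O(λ m)`, dividing by it carries
these bounds over to `μ`. Finally `(1 + 1 / (λ + 1)) ^ (λ - 1) ≤ e` turns the noise level into
`O(A M^{1/2} λ^{1/2} K^{-λ})`.
-/

namespace SuperResolution

noncomputable section

section Constants

lemma pi_sq_le : π ^ 2 ≤ 9.8697 := by
  nlinarith [Real.pi_lt_d6, Real.pi_pos]

lemma le_pi_sq : 9.8695 ≤ π ^ 2 := by
  nlinarith [Real.pi_gt_d6]

lemma one_div_pi_le : 1 / π ≤ 0.31832 := by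
  rw [div_le_iff₀ Real.pi_pos]
  nlinarith [Real.pi_gt_d6]

lemma pow_three_mul_le {s c : ℝ} (h : s ^ 2 + c ^ 2 = 1) : s ^ 3 * c ≤ 0.325 := by
  have hsq : (s ^ 3 * c) ^ 2 ≤ 0.325 ^ 2 := by
    have hc : (s ^ 3 * c) ^ 2 = (s ^ 2) ^ 3 * (1 - s ^ 2) := by rw [← h]; ring
    rw [hc]
    set y := s ^ 2
    nlinarith [sq_nonneg (y * (y - 3 / 4)), sq_nonneg (y - 3 / 4), sq_nonneg (y ^ 2 - 9 / 16),
      sq_nonneg y]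
  exact (abs_le_of_sq_le_sq' hsq (by norm_num)).2

lemma twelve_mul_sq_mul_sq_add_le {s c : ℝ} (h : s ^ 2 + c ^ 2 = 1) :
    12 * s ^ 2 * c ^ 2 + 4 * s ^ 4 ≤ 4.5 := by
  have hc : c ^ 2 = 1 - s ^ 2 := by linarith
  rw [hc]
  nlinarith [sq_nonneg (s ^ 2 - 3 / 4)]

lemma abs_sin_sq_add_abs_cos_sq (y : ℝ) : |Real.sin y| ^ 2 + |Real.cos y| ^ 2 = 1 := by
  rw [sq_abs, sq_abs, Real.sin_sq_add_cos_sq]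

end Constants

section Dirichlet

variable {N : ℕ}

/-- The frequencies `π (2k - (N - 1)) / N`, `k < N`, of the rescaled Dirichlet kernel. -/
def dirichletFreq (N k : ℕ) : ℝ := π * (2 * (k : ℝ) - ((N : ℝ) - 1)) / N

/-- The Dirichlet kernel `sin (πx) / (N sin (πx / N))`, normalized to be `1` at the origin and
rescaled so that it is (anti)periodic with period `N`; the trigonometric sum avoids the removable
singularities of the quotient. -/
def dirichlet (N : ℕ) (x : ℝ) : ℝ :=
  1 / (N : ℝ) * ∑ k ∈ Finset.range N, Real.cos (dirichletFreq N k * x)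

/-- The derivative of `dirichlet`, as a trigonometric sum. -/
def dirichletDeriv (N : ℕ) (x : ℝ) : ℝ :=
  1 / (N : ℝ) * ∑ k ∈ Finset.range N, -dirichletFreq N k * Real.sin (dirichletFreq N k * x)

/-- The second derivative of `dirichlet`, as a trigonometric sum. -/
def dirichletDeriv₂ (N : ℕ) (x : ℝ) : ℝ :=
  1 / (N : ℝ) * ∑ k ∈ Finset.range N, -dirichletFreq N k ^ 2 * Real.cos (dirichletFreq N k * x)

lemma hasDerivAt_dirichlet (N : ℕ) (x : ℝ) :
    HasDerivAt (dirichlet N) (dirichletDeriv N x) x := by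
  refine (HasDerivAt.fun_sum fun k _ => ?_).const_mul _
  exact ((hasDerivAt_id' x).const_mul (dirichletFreq N k)).cos.congr_deriv (by ring)

lemma hasDerivAt_dirichletDeriv (N : ℕ) (x : ℝ) :
    HasDerivAt (dirichletDeriv N) (dirichletDeriv₂ N x) x := by
  refine (HasDerivAt.fun_sum fun k _ => ?_).const_mul _
  exact (((hasDerivAt_id' x).const_mul (dirichletFreq N k)).sin.const_mul _).congr_deriv (by ring)

lemma dirichlet_zero (hN : 0 < N) : dirichlet N 0 = 1 := by
  have hN₀ : (N : ℝ) ≠ 0 := by positivity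
  simp [dirichlet, hN₀]

lemma dirichletDeriv_zero (N : ℕ) : dirichletDeriv N 0 = 0 := by
  simp [dirichletDeriv]

lemma dirichlet_abs (N : ℕ) (x : ℝ) : dirichlet N |x| = dirichlet N x := by
  rcases abs_choice x with h | h <;> simp [h, dirichlet]

lemma mul_sin_mul_dirichlet (hN : 0 < N) (x : ℝ) :
    N * Real.sin (π * x / N) * dirichlet N x = Real.sin (π * x) := by
  have hN₀ : (N : ℝ) ≠ 0 := by positivity
  have product_to_sum : ∀ k : ℕ, 2 * Real.sin (π * x / N) * Real.cos (dirichletFreq N k * x) =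
      Real.sin (π * (2 * ((k + 1 : ℕ) : ℝ) - N) * x / N) -
        Real.sin (π * (2 * (k : ℝ) - N) * x / N) := by
    intro k
    have upper : π * (2 * ((k + 1 : ℕ) : ℝ) - N) * x / N = dirichletFreq N k * x + π * x / N := by
      unfold dirichletFreq; push_cast; field_simp; ring
    have lower : π * (2 * (k : ℝ) - N) * x / N = dirichletFreq N k * x - π * x / N := by
      unfold dirichletFreq; field_simp; ring
    rw [upper, lower, Real.sin_add, Real.sin_sub]
    ring
  have telescoped : 2 * Real.sin (π * x / N) *
      ∑ k ∈ Finset.range N, Real.cos (dirichletFreq N k * x) = 2 * Real.sin (π * x) := by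
    rw [Finset.mul_sum, Finset.sum_congr rfl fun k _ => product_to_sum k,
      Finset.sum_range_sub fun k : ℕ => Real.sin (π * (2 * (k : ℝ) - N) * x / N)]
    have last : π * (2 * (N : ℝ) - N) * x / N = π * x := by field_simp; ring
    have first : π * (2 * ((0 : ℕ) : ℝ) - N) * x / N = -(π * x) := by push_cast; field_simp; ring
    rw [last, first, Real.sin_neg]
    ring
  calc N * Real.sin (π * x / N) * dirichlet N x
      = Real.sin (π * x / N) * ∑ k ∈ Finset.range N, Real.cos (dirichletFreq N k * x) := by
        rw [dirichlet, mul_right_comm, ← mul_assoc, mul_one_div_cancel hN₀, one_mul, mul_comm]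
    _ = Real.sin (π * x) := by linarith

lemma mul_sin_mul_dirichletDeriv (hN : 0 < N) (x : ℝ) :
    N * Real.sin (π * x / N) * dirichletDeriv N x =
      π * Real.cos (π * x) - π * Real.cos (π * x / N) * dirichlet N x := by
  have hlin : HasDerivAt (fun y : ℝ => π * y / N) (π * 1 / N) x :=
    ((hasDerivAt_id' x).const_mul π).div_const (N : ℝ)
  have hprod := (hlin.sin.const_mul (N : ℝ)).fun_mul (hasDerivAt_dirichlet N x)
  have hsin := ((hasDerivAt_id' x).const_mul π).sin
  simp only [mul_sin_mul_dirichlet hN] at hprod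
  have := hprod.unique hsin
  field_simp at this
  linarith

lemma mul_sin_mul_dirichletDeriv₂ (hN : 0 < N) (x : ℝ) :
    N * Real.sin (π * x / N) * dirichletDeriv₂ N x =
      -(π ^ 2 * (1 - 1 / (N : ℝ) ^ 2) * Real.sin (π * x)) -
        2 * π * Real.cos (π * x / N) * dirichletDeriv N x := by
  have hlin : HasDerivAt (fun y : ℝ => π * y / N) (π * 1 / N) x :=
    ((hasDerivAt_id' x).const_mul π).div_const (N : ℝ)
  have hprod := (hlin.sin.const_mul (N : ℝ)).fun_mul (hasDerivAt_dirichletDeriv N x)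
  have hrhs := (((hasDerivAt_id' x).const_mul π).cos.const_mul π).fun_sub
    ((hlin.cos.const_mul π).fun_mul (hasDerivAt_dirichlet N x))
  simp only [mul_sin_mul_dirichletDeriv hN] at hprod
  have := hprod.unique hrhs
  rw [← mul_sin_mul_dirichlet hN x] at this ⊢
  field_simp at this ⊢
  linarith

/-- The envelope `1 / |N sin (πx / N)|` of the Dirichlet kernel. It takes the junk value `0` at
multiples of `N`, which is why the estimates below assume `sin (πx / N) ≠ 0`. -/
def envelope (N : ℕ) (x : ℝ) : ℝ := |N * Real.sin (π * x / N)|⁻¹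

lemma envelope_nonneg (N : ℕ) (x : ℝ) : 0 ≤ envelope N x := by
  unfold envelope; positivity

lemma envelope_neg (N : ℕ) (x : ℝ) : envelope N (-x) = envelope N x := by
  rw [envelope, mul_neg, neg_div, Real.sin_neg, mul_neg, abs_neg, envelope]

lemma abs_le_envelope_mul (hN : 0 < N) {x y C : ℝ} (hs : Real.sin (π * x / N) ≠ 0)
    (h : |N * Real.sin (π * x / N) * y| ≤ C) : |y| ≤ envelope N x * C := by
  rw [envelope, le_inv_mul_iff₀ (by positivity), ← abs_mul]
  exact h

lemma abs_dirichlet_le (hN : 0 < N) {x : ℝ} (hs : Real.sin (π * x / N) ≠ 0) :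
    |dirichlet N x| ≤ envelope N x * |Real.sin (π * x)| :=
  abs_le_envelope_mul hN hs (by rw [mul_sin_mul_dirichlet hN])

lemma abs_dirichletDeriv_le (hN : 0 < N) {x : ℝ} (hs : Real.sin (π * x / N) ≠ 0) :
    |dirichletDeriv N x| ≤
      π * envelope N x * (|Real.cos (π * x)| + envelope N x * |Real.sin (π * x)|) := by
  rw [mul_comm π, mul_assoc]
  refine abs_le_envelope_mul hN hs ?_
  rw [mul_sin_mul_dirichletDeriv hN]
  calc |π * Real.cos (π * x) - π * Real.cos (π * x / N) * dirichlet N x|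
      ≤ |π * Real.cos (π * x)| + |π * Real.cos (π * x / N) * dirichlet N x| := abs_sub _ _
    _ = π * (|Real.cos (π * x)| + |Real.cos (π * x / N)| * |dirichlet N x|) := by
        rw [abs_mul, abs_mul, abs_mul, abs_of_pos Real.pi_pos]; ring
    _ ≤ π * (|Real.cos (π * x)| + 1 * (envelope N x * |Real.sin (π * x)|)) := by
        gcongr
        · exact Real.abs_cos_le_one _
        · exact abs_dirichlet_le hN hs
    _ = _ := by ring

lemma abs_dirichletDeriv₂_le (hN : 0 < N) {x : ℝ} (hs : Real.sin (π * x / N) ≠ 0) :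
    |dirichletDeriv₂ N x| ≤ π ^ 2 * envelope N x * (|Real.sin (π * x)| +
      2 * envelope N x * (|Real.cos (π * x)| + envelope N x * |Real.sin (π * x)|)) := by
  rw [mul_comm (π ^ 2), mul_assoc]
  refine abs_le_envelope_mul hN hs ?_
  rw [mul_sin_mul_dirichletDeriv₂ hN]
  have hN₁ : (1 : ℝ) ≤ (N : ℝ) ^ 2 := one_le_pow₀ (mod_cast hN)
  have hfactor : 0 ≤ 1 - 1 / (N : ℝ) ^ 2 := sub_nonneg.2 ((div_le_one (by positivity)).2 hN₁)
  have hfactor' : 1 - 1 / (N : ℝ) ^ 2 ≤ 1 := sub_le_self _ (by positivity)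
  calc |-(π ^ 2 * (1 - 1 / (N : ℝ) ^ 2) * Real.sin (π * x)) -
        2 * π * Real.cos (π * x / N) * dirichletDeriv N x|
      ≤ |π ^ 2 * (1 - 1 / (N : ℝ) ^ 2) * Real.sin (π * x)| +
        |2 * π * Real.cos (π * x / N) * dirichletDeriv N x| := by
        rw [← abs_neg (π ^ 2 * _ * _)]; exact abs_sub _ _
    _ = π ^ 2 * (1 - 1 / (N : ℝ) ^ 2) * |Real.sin (π * x)| +
        2 * π * |Real.cos (π * x / N)| * |dirichletDeriv N x| := by
        simp only [abs_mul, abs_of_nonneg hfactor, abs_of_pos Real.pi_pos, abs_pow, abs_two]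
    _ ≤ π ^ 2 * 1 * |Real.sin (π * x)| + 2 * π * 1 *
        (π * envelope N x * (|Real.cos (π * x)| + envelope N x * |Real.sin (π * x)|)) := by
        gcongr
        · exact Real.abs_cos_le_one _
        · exact abs_dirichletDeriv_le hN hs
    _ = _ := by ring

end Dirichlet

section Kernel

variable {N : ℕ}

/-- The Jackson-type kernel `dirichlet ^ 4`, whose fast decay makes interpolation well
conditioned. -/
def jackson (N : ℕ) (x : ℝ) : ℝ := dirichlet N x ^ 4

/-- The derivative of `jackson`. -/
def jacksonDeriv (N : ℕ) (x : ℝ) : ℝ := 4 * dirichlet N x ^ 3 * dirichletDeriv N x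

/-- The second derivative of `jackson`. -/
def jacksonDeriv₂ (N : ℕ) (x : ℝ) : ℝ :=
  12 * dirichlet N x ^ 2 * dirichletDeriv N x ^ 2 + 4 * dirichlet N x ^ 3 * dirichletDeriv₂ N x

/-- An `N`-periodic substitute for the coordinate function `x ↦ x` near the origin. -/
def sinCoord (N : ℕ) (x : ℝ) : ℝ := N / (2 * π) * Real.sin (2 * π / N * x)

/-- The derivative of `sinCoord`. -/
def sinCoordDeriv (N : ℕ) (x : ℝ) : ℝ := Real.cos (2 * π / N * x)

/-- The second derivative of `sinCoord`. -/
def sinCoordDeriv₂ (N : ℕ) (x : ℝ) : ℝ := -(2 * π / N) * Real.sin (2 * π / N * x)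

/-- The basic interpolation function, with value `α` and derivative `β` at the origin. -/
def hermiteTerm (N : ℕ) (α β : ℂ) (x : ℝ) : ℂ := jackson N x * (α + β * sinCoord N x)

/-- The derivative of `hermiteTerm`. -/
def hermiteTermDeriv (N : ℕ) (α β : ℂ) (x : ℝ) : ℂ :=
  jacksonDeriv N x * (α + β * sinCoord N x) + jackson N x * (β * sinCoordDeriv N x)

/-- The second derivative of `hermiteTerm`. -/
def hermiteTermDeriv₂ (N : ℕ) (α β : ℂ) (x : ℝ) : ℂ :=
  jacksonDeriv₂ N x * (α + β * sinCoord N x) +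
    2 * (jacksonDeriv N x * (β * sinCoordDeriv N x)) + jackson N x * (β * sinCoordDeriv₂ N x)

lemma hasDerivAt_jackson (N : ℕ) (x : ℝ) : HasDerivAt (jackson N) (jacksonDeriv N x) x :=
  (hasDerivAt_dirichlet N x).fun_pow 4 |>.congr_deriv (by unfold jacksonDeriv; push_cast; ring)

lemma hasDerivAt_jacksonDeriv (N : ℕ) (x : ℝ) :
    HasDerivAt (jacksonDeriv N) (jacksonDeriv₂ N x) x :=
  (((hasDerivAt_dirichlet N x).fun_pow 3).const_mul 4).fun_mul (hasDerivAt_dirichletDeriv N x)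
    |>.congr_deriv (by unfold jacksonDeriv₂; push_cast; ring)

lemma hasDerivAt_sinCoord (hN : 0 < N) (x : ℝ) :
    HasDerivAt (sinCoord N) (sinCoordDeriv N x) x := by
  have hN₀ : (N : ℝ) ≠ 0 := by positivity
  exact (((hasDerivAt_id' x).const_mul (2 * π / (N : ℝ))).sin.const_mul (N / (2 * π))).congr_deriv
    (by unfold sinCoordDeriv; field_simp)

lemma hasDerivAt_sinCoordDeriv (N : ℕ) (x : ℝ) :
    HasDerivAt (sinCoordDeriv N) (sinCoordDeriv₂ N x) x :=
  ((hasDerivAt_id' x).const_mul (2 * π / (N : ℝ))).cos.congr_deriv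
    (by unfold sinCoordDeriv₂; ring)

lemma hasDerivAt_hermiteTerm (hN : 0 < N) (α β : ℂ) (x : ℝ) :
    HasDerivAt (hermiteTerm N α β) (hermiteTermDeriv N α β x) x :=
  (hasDerivAt_jackson N x).ofReal_comp.fun_mul
    (((hasDerivAt_sinCoord hN x).ofReal_comp.const_mul β).const_add α)

lemma hasDerivAt_hermiteTermDeriv (hN : 0 < N) (α β : ℂ) (x : ℝ) :
    HasDerivAt (hermiteTermDeriv N α β) (hermiteTermDeriv₂ N α β x) x := by
  have value := ((hasDerivAt_sinCoord hN x).ofReal_comp.const_mul β).const_add α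
  have slope := (hasDerivAt_sinCoordDeriv N x).ofReal_comp.const_mul β
  exact (((hasDerivAt_jacksonDeriv N x).ofReal_comp.fun_mul value).fun_add
    ((hasDerivAt_jackson N x).ofReal_comp.fun_mul slope)).congr_deriv
    (by unfold hermiteTermDeriv₂; ring)

lemma jackson_zero (hN : 0 < N) : jackson N 0 = 1 := by
  rw [jackson, dirichlet_zero hN, one_pow]

lemma jacksonDeriv_zero (N : ℕ) : jacksonDeriv N 0 = 0 := by
  rw [jacksonDeriv, dirichletDeriv_zero, mul_zero]

lemma sinCoord_zero (N : ℕ) : sinCoord N 0 = 0 := by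
  simp [sinCoord]

lemma hermiteTerm_zero (hN : 0 < N) (α β : ℂ) : hermiteTerm N α β 0 = α := by
  simp [hermiteTerm, jackson_zero hN, sinCoord_zero]

lemma hermiteTermDeriv_zero (hN : 0 < N) (α β : ℂ) : hermiteTermDeriv N α β 0 = β := by
  simp [hermiteTermDeriv, jackson_zero hN, jacksonDeriv_zero, sinCoordDeriv]

lemma periodic_of_hasDerivAt {f f' : ℝ → ℂ} {c : ℝ} (hf : Function.Periodic f c)
    (hf' : ∀ x, HasDerivAt f (f' x) x) : Function.Periodic f' c := fun x =>
  ((hf' (x + c)).comp_add_const x c).unique (by simpa only [hf _] using hf' x)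

lemma dirichlet_add_natCast (hN : 0 < N) (x : ℝ) :
    dirichlet N (x + N) = (-1) ^ (1 - N : ℤ) * dirichlet N x := by
  have hN₀ : (N : ℝ) ≠ 0 := by positivity
  have shift (k : ℕ) : Real.cos (dirichletFreq N k * (x + N)) =
      (-1) ^ (1 - N : ℤ) * Real.cos (dirichletFreq N k * x) := by
    have hphase : dirichletFreq N k * (x + N) =
        dirichletFreq N k * x + ((2 * k + (1 - N) : ℤ) : ℝ) * π := by
      unfold dirichletFreq; push_cast; field_simp; ring
    rw [hphase, Real.cos_add_int_mul_pi, zpow_add₀ (by norm_num), (even_two_mul _).neg_one_zpow,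
      one_mul]
  simp_rw [dirichlet, shift, ← Finset.mul_sum]
  ring

lemma jackson_periodic (hN : 0 < N) : Function.Periodic (jackson N) N := fun x => by
  have hsign : ((-1 : ℝ) ^ (1 - N : ℤ)) ^ 4 = 1 := by
    rw [← zpow_natCast, ← zpow_mul]
    exact Even.neg_one_zpow ⟨(1 - N) * 2, by push_cast; ring⟩
  rw [jackson, dirichlet_add_natCast hN, mul_pow, hsign, one_mul, jackson]

lemma sinCoord_periodic (hN : 0 < N) : Function.Periodic (sinCoord N) N := fun x => by
  have hN₀ : (N : ℝ) ≠ 0 := by positivity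
  rw [sinCoord, mul_add, div_mul_cancel₀ _ hN₀, Real.sin_add_two_pi, sinCoord]

lemma hermiteTerm_periodic (hN : 0 < N) (α β : ℂ) :
    Function.Periodic (hermiteTerm N α β) N := fun x => by
  rw [hermiteTerm, jackson_periodic hN, sinCoord_periodic hN, hermiteTerm]

end Kernel

section KernelDecay

variable {N : ℕ} {x : ℝ}

lemma abs_jackson_le (hN : 0 < N) (hs : Real.sin (π * x / N) ≠ 0) :
    |jackson N x| ≤ envelope N x ^ 4 := by
  rw [jackson, abs_pow]
  gcongr
  exact (abs_dirichlet_le hN hs).trans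
    (mul_le_of_le_one_right (envelope_nonneg N x) (Real.abs_sin_le_one _))

lemma abs_jacksonDeriv_le (hN : 0 < N) (hs : Real.sin (π * x / N) ≠ 0) :
    |jacksonDeriv N x| ≤ 12.567 * envelope N x ^ 4 * (0.325 + envelope N x) := by
  have hd₀ := abs_dirichlet_le hN hs
  have hd₁ := abs_dirichletDeriv_le hN hs
  have hs₁ : |Real.sin (π * x)| ^ 4 ≤ 1 := pow_le_one₀ (abs_nonneg _) (Real.abs_sin_le_one _)
  have htrig := pow_three_mul_le (abs_sin_sq_add_abs_cos_sq (π * x))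
  have hpi : π ≤ 3.14175 := by linarith [Real.pi_lt_d4]
  have hg := envelope_nonneg N x
  have hs₀ := abs_nonneg (Real.sin (π * x))
  have hc₀ := abs_nonneg (Real.cos (π * x))
  rw [jacksonDeriv, abs_mul, abs_mul, abs_pow, abs_of_pos (by norm_num : (0 : ℝ) < 4)]
  generalize envelope N x = g at *
  generalize |Real.sin (π * x)| = s, |Real.cos (π * x)| = c at *
  calc 4 * |dirichlet N x| ^ 3 * |dirichletDeriv N x|
      ≤ 4 * (g * s) ^ 3 * (π * g * (c + g * s)) := by gcongr
    _ = 4 * π * (g ^ 4 * (s ^ 3 * c + g * s ^ 4)) := by ring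
    _ ≤ 4 * 3.14175 * (g ^ 4 * (0.325 + g * 1)) := by gcongr
    _ = _ := by ring

lemma abs_jacksonDeriv₂_le (hN : 0 < N) (hs : Real.sin (π * x / N) ≠ 0) :
    |jacksonDeriv₂ N x| ≤
      9.8697 * envelope N x ^ 4 * (4.5 + 10.4 * envelope N x + 20 * envelope N x ^ 2) := by
  have hd₀ := abs_dirichlet_le hN hs
  have hd₁ := abs_dirichletDeriv_le hN hs
  have hd₂ := abs_dirichletDeriv₂_le hN hs
  have hs₁ : |Real.sin (π * x)| ^ 4 ≤ 1 := pow_le_one₀ (abs_nonneg _) (Real.abs_sin_le_one _)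
  have htrig := pow_three_mul_le (abs_sin_sq_add_abs_cos_sq (π * x))
  have htrig' := twelve_mul_sq_mul_sq_add_le (abs_sin_sq_add_abs_cos_sq (π * x))
  have hpi := pi_sq_le
  have hg := envelope_nonneg N x
  have hs₀ := abs_nonneg (Real.sin (π * x))
  have hc₀ := abs_nonneg (Real.cos (π * x))
  have htriangle : |jacksonDeriv₂ N x| ≤ 12 * |dirichlet N x| ^ 2 * |dirichletDeriv N x| ^ 2 +
      4 * |dirichlet N x| ^ 3 * |dirichletDeriv₂ N x| := by
    refine (abs_add_le _ _).trans_eq ?_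
    simp only [abs_mul, abs_pow, Nat.abs_ofNat]
  generalize envelope N x = g at *
  generalize |Real.sin (π * x)| = s, |Real.cos (π * x)| = c at *
  calc |jacksonDeriv₂ N x|
      ≤ 12 * |dirichlet N x| ^ 2 * |dirichletDeriv N x| ^ 2 +
        4 * |dirichlet N x| ^ 3 * |dirichletDeriv₂ N x| := htriangle
    _ ≤ 12 * (g * s) ^ 2 * (π * g * (c + g * s)) ^ 2 +
        4 * (g * s) ^ 3 * (π ^ 2 * g * (s + 2 * g * (c + g * s))) := by gcongr
    _ = π ^ 2 * (g ^ 4 * ((12 * s ^ 2 * c ^ 2 + 4 * s ^ 4) + 32 * g * (s ^ 3 * c) +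
        20 * g ^ 2 * s ^ 4)) := by ring
    _ ≤ 9.8697 * (g ^ 4 * (4.5 + 32 * g * 0.325 + 20 * g ^ 2 * 1)) := by gcongr
    _ = _ := by ring

lemma envelope_mul_abs_sinCoord_le (hN : 0 < N) (hs : Real.sin (π * x / N) ≠ 0) :
    envelope N x * |sinCoord N x| ≤ 0.3184 := by
  have hN₀ : (0 : ℝ) < N := by positivity
  have hcancel : envelope N x * |sinCoord N x| = 1 / π * |Real.cos (π * x / N)| := by
    rw [sinCoord, show 2 * π / N * x = 2 * (π * x / N) by ring, Real.sin_two_mul, envelope]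
    simp only [abs_mul, abs_div, abs_of_pos hN₀, abs_of_pos Real.pi_pos, abs_two]
    field_simp
  calc envelope N x * |sinCoord N x| = 1 / π * |Real.cos (π * x / N)| := hcancel
    _ ≤ 0.31832 * 1 := by gcongr; exacts [one_div_pi_le, Real.abs_cos_le_one _]
    _ ≤ 0.3184 := by norm_num

lemma abs_sinCoordDeriv₂_le (hN : 64 ≤ N) (x : ℝ) :
    |sinCoordDeriv₂ N x| ≤ 0.00964 * |sinCoord N x| := by
  have hN₁ : (64 : ℝ) ≤ N := by exact_mod_cast hN
  have hode : sinCoordDeriv₂ N x = -(4 * π ^ 2 / N ^ 2) * sinCoord N x := by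
    unfold sinCoordDeriv₂ sinCoord; field_simp; ring
  rw [hode, abs_mul, abs_neg, abs_of_pos (by positivity)]
  gcongr
  rw [div_le_iff₀ (by positivity)]
  nlinarith [pi_sq_le]

lemma envelope_mul_abs_sinCoordDeriv₂_le (hN : 64 ≤ N) (hs : Real.sin (π * x / N) ≠ 0) :
    envelope N x * |sinCoordDeriv₂ N x| ≤ 0.0031 := by
  have hbound := envelope_mul_abs_sinCoord_le (by lia : 0 < N) hs
  have hode := mul_le_mul_of_nonneg_left (abs_sinCoordDeriv₂_le hN x) (envelope_nonneg N x)
  linarith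

/-- A nonnegative increasing function on `[0, ∞)`, thought of as a function of `envelope`. -/
structure IsProfile (Φ : ℝ → ℝ) : Prop where
  nonneg_zero : 0 ≤ Φ 0
  monotoneOn : MonotoneOn Φ (Set.Ici 0)

lemma IsProfile.nonneg {Φ : ℝ → ℝ} (hΦ : IsProfile Φ) {g : ℝ} (hg : 0 ≤ g) : 0 ≤ Φ g :=
  hΦ.nonneg_zero.trans (hΦ.monotoneOn Set.self_mem_Ici hg hg)

/-- `f` is `N`-periodic and dominated by `g³ Φ(g)`, where `g` is the Dirichlet envelope. -/
structure EnvelopeBounded (N : ℕ) (Φ : ℝ → ℝ) (f : ℝ → ℂ) : Prop where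
  periodic : Function.Periodic f N
  norm_le : ∀ x, Real.sin (π * x / N) ≠ 0 → ‖f x‖ ≤ envelope N x ^ 3 * Φ (envelope N x)

/-- The profile of `hermiteTerm N α β` when `‖α‖ ≤ a` and `‖β‖ ≤ b`; the decimal rounds `1 / π`. -/
def valueProfile (a b g : ℝ) : ℝ := a * g + 0.3184 * b

/-- The profile of `hermiteTermDeriv N α β` when `‖α‖ ≤ a` and `‖β‖ ≤ b`; here `12.567` rounds
`4π`. -/
def derivProfile (a b g : ℝ) : ℝ := 12.567 * (0.325 + g) * valueProfile a b g + g * b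

/-- The profile of `hermiteTermDeriv₂ N α β` when `‖α‖ ≤ a` and `‖β‖ ≤ b`. -/
def deriv₂Profile (a b g : ℝ) : ℝ :=
  9.8697 * (4.5 + 10.4 * g + 20 * g ^ 2) * valueProfile a b g +
    2 * (12.567 * (0.325 + g) * g * b) + 0.0031 * b

variable {α β : ℂ} {a b : ℝ}

lemma valueProfile_nonneg (ha : 0 ≤ a) (hb : 0 ≤ b) {g : ℝ} (hg : 0 ≤ g) :
    0 ≤ valueProfile a b g := by
  unfold valueProfile; positivity

lemma isProfile_valueProfile (ha : 0 ≤ a) (hb : 0 ≤ b) : IsProfile (valueProfile a b) where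
  nonneg_zero := valueProfile_nonneg ha hb le_rfl
  monotoneOn := fun g _ h _ hgh => by unfold valueProfile; gcongr

lemma isProfile_derivProfile (ha : 0 ≤ a) (hb : 0 ≤ b) : IsProfile (derivProfile a b) where
  nonneg_zero := by unfold derivProfile valueProfile; positivity
  monotoneOn := fun g (hg : 0 ≤ g) h (hh : 0 ≤ h) hgh => by
    unfold derivProfile valueProfile; gcongr

lemma isProfile_deriv₂Profile (ha : 0 ≤ a) (hb : 0 ≤ b) : IsProfile (deriv₂Profile a b) where
  nonneg_zero := by unfold deriv₂Profile valueProfile; positivity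
  monotoneOn := fun g (hg : 0 ≤ g) h (hh : 0 ≤ h) hgh => by
    unfold deriv₂Profile valueProfile; gcongr

lemma envelope_mul_norm_add_le (hN : 0 < N) (hs : Real.sin (π * x / N) ≠ 0) (hα : ‖α‖ ≤ a)
    (hβ : ‖β‖ ≤ b) :
    envelope N x * ‖α + β * (sinCoord N x : ℂ)‖ ≤ valueProfile a b (envelope N x) := by
  have hg := envelope_nonneg N x
  calc envelope N x * ‖α + β * (sinCoord N x : ℂ)‖
      ≤ envelope N x * (‖α‖ + ‖β‖ * |sinCoord N x|) := by
        gcongr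
        refine (norm_add_le _ _).trans ?_
        rw [norm_mul, Complex.norm_real, Real.norm_eq_abs]
    _ = envelope N x * ‖α‖ + (envelope N x * |sinCoord N x|) * ‖β‖ := by ring
    _ ≤ envelope N x * a + 0.3184 * b := by
        gcongr
        exact envelope_mul_abs_sinCoord_le hN hs
    _ = valueProfile a b (envelope N x) := by unfold valueProfile; ring

lemma envelopeBounded_hermiteTerm (hN : 0 < N) (hα : ‖α‖ ≤ a) (hβ : ‖β‖ ≤ b) :
    EnvelopeBounded N (valueProfile a b) (hermiteTerm N α β) where
  periodic := hermiteTerm_periodic hN α β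
  norm_le := fun x hs => by
    have hg := envelope_nonneg N x
    rw [hermiteTerm, norm_mul, Complex.norm_real, Real.norm_eq_abs]
    calc |jackson N x| * ‖α + β * (sinCoord N x : ℂ)‖
        ≤ envelope N x ^ 4 * ‖α + β * (sinCoord N x : ℂ)‖ := by
          gcongr; exact abs_jackson_le hN hs
      _ = envelope N x ^ 3 * (envelope N x * ‖α + β * (sinCoord N x : ℂ)‖) := by ring
      _ ≤ _ := by gcongr; exact envelope_mul_norm_add_le hN hs hα hβ

lemma envelopeBounded_hermiteTermDeriv (hN : 0 < N) (hα : ‖α‖ ≤ a) (hβ : ‖β‖ ≤ b) :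
    EnvelopeBounded N (derivProfile a b) (hermiteTermDeriv N α β) where
  periodic := periodic_of_hasDerivAt (hermiteTerm_periodic hN α β) (hasDerivAt_hermiteTerm hN α β)
  norm_le := fun x hs => by
    have hg := envelope_nonneg N x
    have hvalue := envelope_mul_norm_add_le hN hs hα hβ
    have hb : 0 ≤ b := (norm_nonneg _).trans hβ
    refine (norm_add_le _ _).trans ?_
    simp only [norm_mul, Complex.norm_real, Real.norm_eq_abs]
    calc |jacksonDeriv N x| * ‖α + β * (sinCoord N x : ℂ)‖ +
          |jackson N x| * (‖β‖ * |sinCoordDeriv N x|)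
        ≤ 12.567 * envelope N x ^ 4 * (0.325 + envelope N x) * ‖α + β * (sinCoord N x : ℂ)‖ +
          envelope N x ^ 4 * (b * 1) := by
          gcongr
          exacts [abs_jacksonDeriv_le hN hs, abs_jackson_le hN hs, Real.abs_cos_le_one _]
      _ = envelope N x ^ 3 * (12.567 * (0.325 + envelope N x) *
          (envelope N x * ‖α + β * (sinCoord N x : ℂ)‖) + envelope N x * b) := by ring
      _ ≤ _ := by unfold derivProfile; gcongr

lemma envelopeBounded_hermiteTermDeriv₂ (hN : 64 ≤ N) (hα : ‖α‖ ≤ a) (hβ : ‖β‖ ≤ b) :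
    EnvelopeBounded N (deriv₂Profile a b) (hermiteTermDeriv₂ N α β) where
  periodic := periodic_of_hasDerivAt
    (envelopeBounded_hermiteTermDeriv (by lia) hα hβ).periodic
    (hasDerivAt_hermiteTermDeriv (by lia) α β)
  norm_le := fun x hs => by
    have hN₀ : 0 < N := by lia
    have hg := envelope_nonneg N x
    have hvalue := envelope_mul_norm_add_le hN₀ hs hα hβ
    have hb : 0 ≤ b := (norm_nonneg _).trans hβ
    refine norm_add₃_le.trans ?_
    simp only [norm_mul, Complex.norm_real, Real.norm_eq_abs, Complex.norm_ofNat]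
    calc |jacksonDeriv₂ N x| * ‖α + β * (sinCoord N x : ℂ)‖ +
          2 * (|jacksonDeriv N x| * (‖β‖ * |sinCoordDeriv N x|)) +
          |jackson N x| * (‖β‖ * |sinCoordDeriv₂ N x|)
        ≤ 9.8697 * envelope N x ^ 4 * (4.5 + 10.4 * envelope N x + 20 * envelope N x ^ 2) *
            ‖α + β * (sinCoord N x : ℂ)‖ +
          2 * (12.567 * envelope N x ^ 4 * (0.325 + envelope N x) * (b * 1)) +
          envelope N x ^ 4 * (b * |sinCoordDeriv₂ N x|) := by
          gcongr
          exacts [abs_jacksonDeriv₂_le hN₀ hs, abs_jacksonDeriv_le hN₀ hs,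
            Real.abs_cos_le_one _, abs_jackson_le hN₀ hs]
      _ = envelope N x ^ 3 * (9.8697 * (4.5 + 10.4 * envelope N x + 20 * envelope N x ^ 2) *
            (envelope N x * ‖α + β * (sinCoord N x : ℂ)‖) +
          2 * (12.567 * (0.325 + envelope N x) * envelope N x * b) +
          (envelope N x * |sinCoordDeriv₂ N x|) * b) := by ring
      _ ≤ _ := by
          unfold deriv₂Profile
          gcongr
          exact envelope_mul_abs_sinCoordDeriv₂_le hN hs

end KernelDecay

section EnvelopeBounds

/-- An upper bound for the envelope at distance `u ≤ N / 2` from the lattice, when `64 ≤ N`. -/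
def envelopeBound (u : ℝ) : ℝ := 0.31832 / u + 0.0073

/-- An upper bound for the cubed envelope at distance `u ≤ N / 2` from the lattice, when
`64 ≤ N`. -/
def cubeBound (u : ℝ) : ℝ := 0.03226 / u ^ 3 + 0.0043 / u ^ 2

/-- A telescoping majorant: `cubeBound` is at most its difference quotient with step `0.995`. -/
def cubeTail (u : ℝ) : ℝ := 0.03226 * (1 / u ^ 2 / 1.99) + 0.0043 * (1 / u / 0.995)

/-- An upper bound for the sum of `cubeBound` over the progression `d, d + 0.995, …`. -/
def cubeSumBound (d : ℝ) : ℝ := cubeBound d + cubeTail (d + 0.4975)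

variable {N : ℕ} {u : ℝ}

lemma sin_pos_of_le_half (hu : 0 < u) (hu' : u ≤ N / 2) : 0 < Real.sin (π * u / N) := by
  have hN₀ : (0 : ℝ) < N := by linarith
  refine Real.sin_pos_of_pos_of_lt_pi (by positivity) ?_
  rw [div_lt_iff₀ hN₀]
  nlinarith [Real.pi_pos]

lemma sq_phase_le (hu : 0 < u) (hu' : u ≤ N / 2) : (π * u / N) ^ 2 ≤ 2.4675 := by
  have hN₀ : (0 : ℝ) < N := by linarith
  have hratio : u / N ≤ 1 / 2 := (div_le_iff₀ hN₀).2 (by linarith)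
  calc (π * u / N) ^ 2 = π ^ 2 * (u / N) ^ 2 := by ring
    _ ≤ 9.8697 * (1 / 2) ^ 2 := by gcongr; exact pi_sq_le
    _ ≤ 2.4675 := by norm_num

lemma envelope_le_div (hu : 0 < u) (hu' : u ≤ N / 2) :
    envelope N u ≤ (1 + 0.2915 * (π * u / N) ^ 2) / (π * u) := by
  have hN₀ : (0 : ℝ) < N := by linarith
  have hsin := sin_pos_of_le_half hu hu'
  have hphase : π * u = N * (π * u / N) := by field_simp
  have hz : 0 < π * u / N := by positivity
  have hz₂ := sq_phase_le hu hu'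
  rw [envelope, abs_of_pos (mul_pos hN₀ hsin), ← one_div,
    div_le_div_iff₀ (mul_pos hN₀ hsin) (by positivity), one_mul]
  conv_lhs => rw [hphase]
  generalize π * u / N = z at *
  have hcube : z * (1 - z ^ 2 / 6) ≤ Real.sin z := by
    linarith [Real.sin_ge_sub_cube hz.le]
  have hfactor : 1 ≤ (1 + 0.2915 * z ^ 2) * (1 - z ^ 2 / 6) := by nlinarith [sq_nonneg z]
  calc N * z ≤ (1 + 0.2915 * z ^ 2) * (1 - z ^ 2 / 6) * (N * z) :=
        le_mul_of_one_le_left (by positivity) hfactor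
    _ = (1 + 0.2915 * z ^ 2) * (N * (z * (1 - z ^ 2 / 6))) := by ring
    _ ≤ (1 + 0.2915 * z ^ 2) * (N * Real.sin z) := by gcongr

lemma envelope_le_envelopeBound (hN : 64 ≤ N) (hu : 0 < u) (hu' : u ≤ N / 2) :
    envelope N u ≤ envelopeBound u := by
  have hN₁ : (64 : ℝ) ≤ N := by exact_mod_cast hN
  have hphase : π * u / N ≤ 1.571 := abs_le_of_sq_le_sq' (by
    linarith [sq_phase_le hu hu']) (by norm_num) |>.2
  calc envelope N u ≤ (1 + 0.2915 * (π * u / N) ^ 2) / (π * u) := envelope_le_div hu hu'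
    _ = 1 / π / u + 0.2915 * (π * u / N) / N := by field_simp
    _ ≤ 0.31832 / u + 0.2915 * 1.571 / 64 := by gcongr; exact one_div_pi_le
    _ ≤ envelopeBound u := by unfold envelopeBound; gcongr; norm_num

lemma envelope_pow_three_le_cubeBound (hN : 64 ≤ N) (hu : 0 < u) (hu' : u ≤ N / 2) :
    envelope N u ^ 3 ≤ cubeBound u := by
  have hN₁ : (64 : ℝ) ≤ N := by exact_mod_cast hN
  have hnumerator : (1 + 0.2915 * (π * u / N) ^ 2) ^ 3 ≤ 1 + 1.6925 * (π * u / N) ^ 2 := by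
    have hy := sq_phase_le hu hu'
    have hy₀ := sq_nonneg (π * u / N)
    generalize (π * u / N) ^ 2 = y at *
    have hquadratic : 0.8745 + 0.2549168 * y + 0.02477 * y ^ 2 ≤ 1.6925 := by nlinarith
    nlinarith [mul_le_mul_of_nonneg_left hquadratic hy₀]
  have hpi₃ : 1 / π ^ 3 ≤ 0.03226 := by
    rw [div_le_iff₀ (by positivity)]
    have : (3.141592 : ℝ) ^ 3 ≤ π ^ 3 := by gcongr; exact Real.pi_gt_d6.le
    linarith
  have hinv : 1 / (N : ℝ) ≤ 0.5 / u := by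
    rw [div_le_div_iff₀ (by positivity) hu]; linarith
  calc envelope N u ^ 3 ≤ ((1 + 0.2915 * (π * u / N) ^ 2) / (π * u)) ^ 3 := by
        gcongr
        exacts [envelope_nonneg N u, envelope_le_div hu hu']
    _ = (1 + 0.2915 * (π * u / N) ^ 2) ^ 3 / (π * u) ^ 3 := div_pow _ _ _
    _ ≤ (1 + 1.6925 * (π * u / N) ^ 2) / (π * u) ^ 3 := by gcongr
    _ = 1 / π ^ 3 / u ^ 3 + 1.6925 * (1 / π) * (1 / N) * (1 / N) / u := by field_simp
    _ ≤ 0.03226 / u ^ 3 + 1.6925 * 0.31832 * (1 / 64) * (0.5 / u) / u := by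
        gcongr; exact one_div_pi_le
    _ = 0.03226 / u ^ 3 + (1.6925 * 0.31832 * (1 / 64) * 0.5) / u ^ 2 := by field_simp
    _ ≤ cubeBound u := by unfold cubeBound; gcongr; norm_num

lemma cubeBound_nonneg (hu : 0 ≤ u) : 0 ≤ cubeBound u := by unfold cubeBound; positivity

lemma cubeTail_nonneg (hu : 0 ≤ u) : 0 ≤ cubeTail u := by unfold cubeTail; positivity

lemma cubeSumBound_nonneg (hu : 0 ≤ u) : 0 ≤ cubeSumBound u :=
  add_nonneg (cubeBound_nonneg hu) (cubeTail_nonneg (by linarith))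

lemma cubeBound_antitoneOn : AntitoneOn cubeBound (Set.Ioi 0) := fun u (hu : 0 < u) v _ huv => by
  unfold cubeBound; gcongr

lemma envelopeBound_antitoneOn : AntitoneOn envelopeBound (Set.Ioi 0) :=
  fun u (hu : 0 < u) v _ huv => by unfold envelopeBound; gcongr

end EnvelopeBounds

section SeparatedSums

lemma one_div_pow_three_le_sub {c h : ℝ} (hh : 0 < h) (hc : h < c) :
    1 / c ^ 3 ≤ 1 / (c - h) ^ 2 / (4 * h) - 1 / (c + h) ^ 2 / (4 * h) := by
  have hc₀ : 0 < c := hh.trans hc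
  have hminus : 0 < c - h := sub_pos.2 hc
  have hproduct : (c - h) * (c + h) ≤ c ^ 2 := by nlinarith
  calc 1 / c ^ 3 = c / (c ^ 2) ^ 2 := by field_simp
    _ ≤ c / ((c - h) * (c + h)) ^ 2 := by gcongr
    _ = _ := by field_simp; ring

lemma one_div_sq_le_sub {c h : ℝ} (hh : 0 < h) (hc : h < c) :
    1 / c ^ 2 ≤ 1 / (c - h) / (2 * h) - 1 / (c + h) / (2 * h) := by
  have hc₀ : 0 < c := hh.trans hc
  have hminus : 0 < c - h := sub_pos.2 hc
  calc 1 / c ^ 2 ≤ 1 / ((c - h) * (c + h)) := by gcongr; nlinarith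
    _ = _ := by field_simp; ring

lemma cubeBound_le_cubeTail_sub {c : ℝ} (hc : 0.4975 < c) :
    cubeBound c ≤ cubeTail (c - 0.4975) - cubeTail (c + 0.4975) := by
  have hcube := one_div_pow_three_le_sub (by norm_num) hc
  have hsq := one_div_sq_le_sub (by norm_num) hc
  have hsplit : cubeBound c = 0.03226 * (1 / c ^ 3) + 0.0043 * (1 / c ^ 2) := by
    unfold cubeBound; ring
  rw [hsplit]
  unfold cubeTail
  norm_num at hcube hsq ⊢
  linarith

lemma sum_range_cubeBound_le {d : ℝ} (hd : 0 < d) (L : ℕ) :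
    ∑ n ∈ Finset.range (L + 1), cubeBound (d + n * 0.995) ≤ cubeSumBound d := by
  suffices h : ∑ n ∈ Finset.range (L + 1), cubeBound (d + n * 0.995) ≤
      cubeSumBound d - cubeTail (d + L * 0.995 + 0.4975) by
    linarith [cubeTail_nonneg (show 0 ≤ d + L * 0.995 + 0.4975 by positivity)]
  induction L with
  | zero => simp [cubeSumBound]
  | succ L ih =>
    rw [Finset.sum_range_succ]
    have hstep := cubeBound_le_cubeTail_sub (c := d + (L + 1 : ℕ) * 0.995) (by
      push_cast
      linarith [(L.cast_nonneg : (0 : ℝ) ≤ L)])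
    rw [show d + ((L + 1 : ℕ) : ℝ) * 0.995 - 0.4975 = d + L * 0.995 + 0.4975 by
      push_cast; ring] at hstep
    linarith

lemma exists_sum_le_sum_range_of_separated {ι : Type*} {s : Finset ι} {u : ι → ℝ} {f : ℝ → ℝ}
    {d h : ℝ} (hh : 0 < h) (hf : AntitoneOn f (Set.Ici d)) (hf₀ : ∀ x, d ≤ x → 0 ≤ f x)
    (hu : ∀ k ∈ s, d ≤ u k) (hsep : (s : Set ι).Pairwise fun k l => h ≤ |u k - u l|) :
    ∃ L : ℕ, ∑ k ∈ s, f (u k) ≤ ∑ n ∈ Finset.range (L + 1), f (d + n * h) := by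
  let cell : ι → ℕ := fun k => ⌊(u k - d) / h⌋₊
  have hcell : ∀ k ∈ s, d + cell k * h ≤ u k ∧ u k < d + cell k * h + h := fun k hk => by
    have hlo := Nat.floor_le (div_nonneg (sub_nonneg.2 (hu k hk)) hh.le)
    have hhi := Nat.lt_floor_add_one ((u k - d) / h)
    rw [le_div_iff₀ hh] at hlo
    rw [div_lt_iff₀ hh] at hhi
    constructor <;> linarith
  have hinj : Set.InjOn cell s := fun k hk l hl hkl => by
    by_contra hne
    have hk' := hcell k hk
    rw [hkl] at hk'
    have hclose : |u k - u l| < h := abs_lt.2 (by constructor <;> linarith [hcell l hl])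
    exact (hsep hk hl hne).not_gt hclose
  have hge (n : ℕ) : d ≤ d + n * h := le_add_of_nonneg_right (by positivity)
  refine ⟨(s.image cell).sup id, ?_⟩
  calc ∑ k ∈ s, f (u k) ≤ ∑ k ∈ s, f (d + cell k * h) := Finset.sum_le_sum fun k hk =>
        hf (hge _) (hu k hk) (hcell k hk).1
    _ = ∑ n ∈ s.image cell, f (d + n * h) :=
        (Finset.sum_image (f := fun n : ℕ => f (d + n * h)) hinj).symm
    _ ≤ _ := Finset.sum_le_sum_of_subset_of_nonneg
        (fun n hn => Finset.mem_range_succ_iff.2 (Finset.le_sup (f := id) hn))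
        fun n _ _ => hf₀ _ (hge n)

/-- A bound for `∑ g(u)³ Φ(g(u))`, `g` the envelope, over `0.995`-separated points
`d ≤ u ≤ N / 2`. -/
def halfLineBound (Φ : ℝ → ℝ) (d : ℝ) : ℝ := cubeSumBound d * Φ (envelopeBound d)

variable {ι : Type*} {N : ℕ} {Φ : ℝ → ℝ} {d e : ℝ}

lemma envelopeBound_nonneg (hd : 0 ≤ d) : 0 ≤ envelopeBound d := by
  unfold envelopeBound; positivity

lemma sum_envelope_le_halfLineBound (hN : 64 ≤ N) (hΦ : IsProfile Φ) (hd : 0 < d) {s : Finset ι}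
    {u : ι → ℝ} (hu : ∀ k ∈ s, d ≤ u k) (hu' : ∀ k ∈ s, u k ≤ N / 2)
    (hsep : (s : Set ι).Pairwise fun k l => 0.995 ≤ |u k - u l|) :
    ∑ k ∈ s, envelope N (u k) ^ 3 * Φ (envelope N (u k)) ≤ halfLineBound Φ d := by
  have hpos : ∀ k ∈ s, 0 < u k := fun k hk => hd.trans_le (hu k hk)
  have hΦd : 0 ≤ Φ (envelopeBound d) := hΦ.nonneg (envelopeBound_nonneg hd.le)
  obtain ⟨L, hL⟩ := exists_sum_le_sum_range_of_separated (by norm_num)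
    (cubeBound_antitoneOn.mono (Set.Ici_subset_Ioi.2 hd))
    (fun x hx => cubeBound_nonneg (hd.le.trans hx)) hu hsep
  calc ∑ k ∈ s, envelope N (u k) ^ 3 * Φ (envelope N (u k))
      ≤ ∑ k ∈ s, cubeBound (u k) * Φ (envelopeBound d) := by
        refine Finset.sum_le_sum fun k hk => ?_
        have henv : envelope N (u k) ≤ envelopeBound d :=
          (envelope_le_envelopeBound hN (hpos k hk) (hu' k hk)).trans
            (envelopeBound_antitoneOn hd (hpos k hk) (hu k hk))
        exact mul_le_mul (envelope_pow_three_le_cubeBound hN (hpos k hk) (hu' k hk))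
          (hΦ.monotoneOn (envelope_nonneg _ _) (envelopeBound_nonneg hd.le) henv)
          (hΦ.nonneg (envelope_nonneg _ _)) (cubeBound_nonneg (hpos k hk).le)
    _ = (∑ k ∈ s, cubeBound (u k)) * Φ (envelopeBound d) := (Finset.sum_mul ..).symm
    _ ≤ cubeSumBound d * Φ (envelopeBound d) := by
        gcongr
        exact hL.trans (sum_range_cubeBound_le hd L)

lemma sum_envelope_le_halfLineBound_add (hN : 64 ≤ N) (hΦ : IsProfile Φ) (hd : 0 < d) (he : 0 < e)
    {s : Finset ι} {y : ι → ℝ} (hy : ∀ k ∈ s, d ≤ y k ∨ y k ≤ -e)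
    (hy' : ∀ k ∈ s, |y k| ≤ N / 2)
    (hsep : (s : Set ι).Pairwise fun k l => 0.995 ≤ |y k - y l|) :
    ∑ k ∈ s, envelope N (y k) ^ 3 * Φ (envelope N (y k)) ≤
      halfLineBound Φ d + halfLineBound Φ e := by
  rw [← Finset.sum_filter_add_sum_filter_not s (0 < y ·)]
  gcongr
  · refine sum_envelope_le_halfLineBound hN hΦ hd (fun k hk => ?_) (fun k hk => ?_)
      (hsep.mono (Finset.coe_subset.2 (Finset.filter_subset _ s)))
    · obtain ⟨hks, hpos⟩ := Finset.mem_filter.1 hk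
      exact (hy k hks).resolve_right fun h => by linarith
    · exact (le_abs_self _).trans (hy' k (Finset.mem_filter.1 hk).1)
  · simp_rw [← envelope_neg N (y _)]
    refine sum_envelope_le_halfLineBound hN hΦ he (u := fun k => -y k) (fun k hk => ?_)
      (fun k hk => ?_) fun k hk l hl hkl => ?_
    · obtain ⟨hks, hneg⟩ := Finset.mem_filter.1 hk
      exact le_neg_of_le_neg ((hy k hks).resolve_left fun h => hneg (hd.trans_le h))
    · exact (neg_le_abs _).trans (hy' k (Finset.mem_filter.1 hk).1)
    · change 0.995 ≤ |-y k - -y l|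
      rw [neg_sub_neg, abs_sub_comm]
      exact hsep (Finset.mem_filter.1 hk).1 (Finset.mem_filter.1 hl).1 hkl

end SeparatedSums

section ScaledNodes

/-- The nodes `X` are `0.995`-separated modulo `N`. -/
def ScaledSeparated {ι : Type*} (N : ℕ) (X : ι → ℝ) : Prop :=
  ∀ j k, j ≠ k → ∀ n : ℤ, 0.995 ≤ |X j - X k - n * N|

lemma exists_abs_sub_mul_le_half {p : ℝ} (hp : 0 < p) (t : ℝ) : ∃ n : ℤ, |t - n * p| ≤ p / 2 := by
  refine ⟨round (t / p), ?_⟩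
  have hround := abs_sub_round (t / p)
  calc |t - round (t / p) * p| = |(t / p - round (t / p)) * p| := by
        rw [sub_mul, div_mul_cancel₀ _ hp.ne']
    _ = |t / p - round (t / p)| * p := by rw [abs_mul, abs_of_pos hp]
    _ ≤ 1 / 2 * p := by gcongr
    _ = p / 2 := by ring

variable {ι : Type*} {N : ℕ} {X : ι → ℝ} {f : ι → ℝ → ℂ} {Φ : ℝ → ℝ} {t d e : ℝ}

lemma sin_ne_zero_of_abs_le_half {y : ℝ} (hy : y ≠ 0) (hy' : |y| ≤ N / 2) :
    Real.sin (π * y / N) ≠ 0 := by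
  have hsin := (sin_pos_of_le_half (abs_pos.2 hy) hy').ne'
  rcases abs_choice y with h | h
  · rwa [h] at hsin
  · rwa [h, mul_neg, neg_div, Real.sin_neg, neg_ne_zero] at hsin

lemma norm_sum_le_halfLineBound_add (hN : 64 ≤ N) (hX : ScaledSeparated N X) (hΦ : IsProfile Φ)
    (hf : ∀ k, EnvelopeBounded N Φ (f k)) (hd : 0 < d) (he : 0 < e) {s : Finset ι}
    (hs : ∀ k ∈ s, ∀ n : ℤ, d ≤ t - X k - n * N ∨ t - X k - n * N ≤ -e) :
    ‖∑ k ∈ s, f k (t - X k)‖ ≤ halfLineBound Φ d + halfLineBound Φ e := by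
  have hN₀ : (0 : ℝ) < N := by exact_mod_cast (by lia : 0 < N)
  choose n hn using fun k => exists_abs_sub_mul_le_half hN₀ (t - X k)
  refine (norm_sum_le_of_le s fun k hk => ?_).trans
    (sum_envelope_le_halfLineBound_add hN hΦ hd he (fun k hk => hs k hk (n k)) (fun k _ => hn k)
      fun k _ l _ hkl => ?_)
  · have hne : t - X k - n k * N ≠ 0 := fun h => by
      rcases hs k hk (n k) with h' | h' <;> linarith
    rw [← (hf k).periodic.sub_int_mul_eq (n k)]
    exact (hf k).norm_le _ (sin_ne_zero_of_abs_le_half hne (hn k))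
  · convert hX l k hkl.symm (n k - n l) using 2
    push_cast
    ring

lemma norm_sum_le_of_half_le [Fintype ι] (hN : 64 ≤ N) (hX : ScaledSeparated N X)
    (hΦ : IsProfile Φ) (hf : ∀ k, EnvelopeBounded N Φ (f k))
    (ht : ∀ k, ∀ n : ℤ, 0.5 ≤ |t - X k - n * N|) :
    ‖∑ k, f k (t - X k)‖ ≤ 2 * halfLineBound Φ 0.5 := by
  rw [two_mul]
  exact norm_sum_le_halfLineBound_add hN hX hΦ hf (by norm_num) (by norm_num) fun k _ n =>
    (le_abs'.1 (ht k n)).symm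

variable [Fintype ι] [DecidableEq ι]

/-- The contribution to `∑ k, f k (t - X k)` of the nodes other than `X j`. -/
def offNodeSum (X : ι → ℝ) (f : ι → ℝ → ℂ) (j : ι) (t : ℝ) : ℂ :=
  ∑ k ∈ Finset.univ.erase j, f k (t - X k)

lemma sum_eq_add_offNodeSum (X : ι → ℝ) (f : ι → ℝ → ℂ) (j : ι) (t : ℝ) :
    ∑ k, f k (t - X k) = f j (t - X j) + offNodeSum X f j t :=
  (Finset.add_sum_erase _ (fun k => f k (t - X k)) (Finset.mem_univ j)).symm

lemma hasDerivAt_offNodeSum {f' : ι → ℝ → ℂ} (hf : ∀ k x, HasDerivAt (f k) (f' k x) x) (j : ι)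
    (t : ℝ) : HasDerivAt (offNodeSum X f j) (offNodeSum X f' j t) t :=
  HasDerivAt.fun_sum fun k _ => (hf k (t - X k)).comp_sub_const t (X k)

lemma norm_offNodeSum_le (hN : 64 ≤ N) (hX : ScaledSeparated N X) (hΦ : IsProfile Φ)
    (hf : ∀ k, EnvelopeBounded N Φ (f k)) {j : ι} {r : ℝ} (hr : r < 0.995)
    (ht : |t - X j| ≤ r) :
    ‖offNodeSum X f j t‖ ≤ halfLineBound Φ (0.995 - r) + halfLineBound Φ 0.995 := by
  have hnode : ∀ k ∈ Finset.univ.erase j, ∀ n : ℤ,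
      0.995 ≤ X j - X k - n * N ∨ X j - X k - n * N ≤ -0.995 := fun k hk n =>
    (le_abs'.1 (hX j k (Finset.ne_of_mem_erase hk).symm n)).symm
  obtain ⟨hlo, hhi⟩ := abs_le.1 ht
  rcases le_total (X j) t with h | h
  · rw [add_comm]
    refine norm_sum_le_halfLineBound_add hN hX hΦ hf (by norm_num) (by linarith) fun k hk n => ?_
    exact (hnode k hk n).imp (by intro; linarith) (by intro; linarith)
  · refine norm_sum_le_halfLineBound_add hN hX hΦ hf (by linarith) (by norm_num) fun k hk n => ?_
    exact (hnode k hk n).imp (by intro; linarith) (by intro; linarith)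

end ScaledNodes

section HermiteInterpolation

variable {ι : Type*} [Fintype ι] {N : ℕ} {X : ι → ℝ} {v α β : ι → ℂ} {a b V : ℝ}

/-- The `N`-periodic combination of the basic interpolation functions centred at the nodes `X`. -/
def interpolant (N : ℕ) (X : ι → ℝ) (α β : ι → ℂ) (t : ℝ) : ℂ :=
  ∑ k, hermiteTerm N (α k) (β k) (t - X k)

/-- The derivative of `interpolant`. -/
def interpolantDeriv (N : ℕ) (X : ι → ℝ) (α β : ι → ℂ) (t : ℝ) : ℂ :=
  ∑ k, hermiteTermDeriv N (α k) (β k) (t - X k)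

lemma halfLineBound_le {Φ : ℝ → ℝ} (hΦ : IsProfile Φ) {d B G : ℝ} (hd : 0 ≤ d)
    (hB : cubeSumBound d ≤ B) (hG : envelopeBound d ≤ G) : halfLineBound Φ d ≤ B * Φ G := by
  have hG₀ := envelopeBound_nonneg hd
  exact mul_le_mul hB (hΦ.monotoneOn hG₀ (hG₀.trans hG) hG) (hΦ.nonneg hG₀)
    ((cubeSumBound_nonneg hd).trans hB)

lemma cubeSumBound_le : cubeSumBound 0.995 ≤ 0.0477 := by
  unfold cubeSumBound cubeBound cubeTail; norm_num

lemma envelopeBound_le : envelopeBound 0.995 ≤ 0.32723 := by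
  unfold envelopeBound; norm_num

section OffNode

variable [DecidableEq ι]

lemma interpolant_eq_add_offNodeSum (N : ℕ) (X : ι → ℝ) (α β : ι → ℂ) (j : ι) (t : ℝ) :
    interpolant N X α β t = hermiteTerm N (α j) (β j) (t - X j) +
      offNodeSum X (fun k => hermiteTerm N (α k) (β k)) j t :=
  sum_eq_add_offNodeSum X (fun k => hermiteTerm N (α k) (β k)) j t

lemma interpolant_apply_node (hN : 0 < N) (X : ι → ℝ) (α β : ι → ℂ) (j : ι) :
    interpolant N X α β (X j) =
      α j + offNodeSum X (fun k => hermiteTerm N (α k) (β k)) j (X j) := by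
  rw [interpolant_eq_add_offNodeSum, sub_self, hermiteTerm_zero hN]

lemma interpolantDeriv_apply_node (hN : 0 < N) (X : ι → ℝ) (α β : ι → ℂ) (j : ι) :
    interpolantDeriv N X α β (X j) =
      β j + offNodeSum X (fun k => hermiteTermDeriv N (α k) (β k)) j (X j) := by
  rw [interpolantDeriv, sum_eq_add_offNodeSum X (fun k => hermiteTermDeriv N (α k) (β k)) j,
    sub_self, hermiteTermDeriv_zero hN]

lemma norm_offNodeSum_apply_node_le (hN : 64 ≤ N) (hX : ScaledSeparated N X) {f : ι → ℝ → ℂ}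
    {Φ : ℝ → ℝ} (hΦ : IsProfile Φ) (hf : ∀ k, EnvelopeBounded N Φ (f k)) (j : ι) :
    ‖offNodeSum X f j (X j)‖ ≤ 2 * (0.0477 * Φ 0.32723) := by
  have hsum := norm_offNodeSum_le hN hX hΦ hf (j := j) (t := X j) (r := 0) (by norm_num) (by simp)
  have hhalf := halfLineBound_le hΦ (by norm_num) cubeSumBound_le envelopeBound_le
  rw [sub_zero] at hsum
  linarith

end OffNode

lemma norm_interpolant_sub_le (hN : 64 ≤ N) (hX : ScaledSeparated N X) (hα : ∀ k, ‖α k‖ ≤ a)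
    (hβ : ∀ k, ‖β k‖ ≤ b) (j : ι) :
    ‖interpolant N X α β (X j) - α j‖ ≤ 0.0313 * a + 0.0304 * b := by
  classical
  have ha : 0 ≤ a := (norm_nonneg _).trans (hα j)
  have hb : 0 ≤ b := (norm_nonneg _).trans (hβ j)
  have hoff := norm_offNodeSum_apply_node_le hN hX (isProfile_valueProfile ha hb)
    (fun k => envelopeBounded_hermiteTerm (by lia) (hα k) (hβ k)) j
  rw [interpolant_apply_node (by lia), add_sub_cancel_left]
  unfold valueProfile at hoff
  linarith

lemma norm_interpolantDeriv_sub_le (hN : 64 ≤ N) (hX : ScaledSeparated N X)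
    (hα : ∀ k, ‖α k‖ ≤ a) (hβ : ∀ k, ‖β k‖ ≤ b) (j : ι) :
    ‖interpolantDeriv N X α β (X j) - β j‖ ≤ 0.2560 * a + 0.281 * b := by
  classical
  have ha : 0 ≤ a := (norm_nonneg _).trans (hα j)
  have hb : 0 ≤ b := (norm_nonneg _).trans (hβ j)
  have hoff := norm_offNodeSum_apply_node_le hN hX (isProfile_derivProfile ha hb)
    (fun k => envelopeBounded_hermiteTermDeriv (by lia) (hα k) (hβ k)) j
  rw [interpolantDeriv_apply_node (by lia), add_sub_cancel_left]
  unfold derivProfile valueProfile at hoff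
  linarith

lemma norm_coeff_le_of_interpolantDeriv_eq_zero (hN : 64 ≤ N) (hX : ScaledSeparated N X)
    (hV : 0 ≤ V) (h₀ : ∀ j, ‖interpolant N X α β (X j)‖ ≤ V)
    (h₁ : ∀ j, interpolantDeriv N X α β (X j) = 0) : ‖α‖ ≤ 1.0445 * V ∧ ‖β‖ ≤ 0.372 * V := by
  have hα : ‖α‖ ≤ V + (0.0313 * ‖α‖ + 0.0304 * ‖β‖) :=
    (pi_norm_le_iff_of_nonneg (by positivity)).2 fun j =>
      (norm_le_norm_add_norm_sub' _ _).trans (add_le_add (h₀ j) ((norm_sub_rev _ _).trans_le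
        (norm_interpolant_sub_le hN hX (norm_le_pi_norm α) (norm_le_pi_norm β) j)))
  have hβ : ‖β‖ ≤ 0.2560 * ‖α‖ + 0.281 * ‖β‖ :=
    (pi_norm_le_iff_of_nonneg (by positivity)).2 fun j => by
      simpa only [h₁ j, zero_sub, norm_neg] using
        norm_interpolantDeriv_sub_le hN hX (norm_le_pi_norm α) (norm_le_pi_norm β) j
  constructor <;> linarith [norm_nonneg α, norm_nonneg β]

/-- The linear map sending coefficients to the node values of the interpolant and its
derivative. -/
def interpolationMap (N : ℕ) (X : ι → ℝ) :
    (ι → ℂ) × (ι → ℂ) →ₗ[ℂ] (ι → ℂ) × (ι → ℂ) where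
  toFun q := (fun j => interpolant N X q.1 q.2 (X j), fun j => interpolantDeriv N X q.1 q.2 (X j))
  map_add' q r := by
    ext j <;> simp only [interpolant, interpolantDeriv, hermiteTerm, hermiteTermDeriv,
      Prod.mk_add_mk, Prod.fst_add, Prod.snd_add, Pi.add_apply, ← Finset.sum_add_distrib] <;>
    exact Finset.sum_congr rfl fun k _ => by ring
  map_smul' c q := by
    ext j <;> simp only [interpolant, interpolantDeriv, hermiteTerm, hermiteTermDeriv,
      Prod.smul_mk, Prod.smul_fst, Prod.smul_snd, Pi.smul_apply, smul_eq_mul, RingHom.id_apply,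
      Finset.mul_sum] <;>
    exact Finset.sum_congr rfl fun k _ => by ring

lemma interpolationMap_injective (hN : 64 ≤ N) (hX : ScaledSeparated N X) :
    Function.Injective (interpolationMap N X) := by
  refine (injective_iff_map_eq_zero _).2 fun ⟨α, β⟩ h => ?_
  obtain ⟨hvalue, hderiv⟩ := Prod.ext_iff.1 h
  obtain ⟨hα, hβ⟩ := norm_coeff_le_of_interpolantDeriv_eq_zero hN hX le_rfl
    (fun j => (congrArg norm (congrFun hvalue j)).trans_le norm_zero.le) (congrFun hderiv)
  rw [mul_zero, norm_le_zero_iff] at hα hβ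
  exact Prod.ext hα hβ

/-- `interpolant N X α β` takes the values `v` with vanishing derivative at the nodes, and its
coefficients obey the bounds that hold when `‖v j‖ ≤ 1`. -/
structure IsHermiteSolution (N : ℕ) (X : ι → ℝ) (v α β : ι → ℂ) : Prop where
  interpolant_node : ∀ j, interpolant N X α β (X j) = v j
  interpolantDeriv_node : ∀ j, interpolantDeriv N X α β (X j) = 0
  norm_value_le : ∀ k, ‖α k‖ ≤ 1.0445
  norm_slope_le : ∀ k, ‖β k‖ ≤ 0.372

lemma exists_isHermiteSolution (hN : 64 ≤ N) (hX : ScaledSeparated N X) (hv : ∀ j, ‖v j‖ ≤ 1) :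
    ∃ α β, IsHermiteSolution N X v α β := by
  obtain ⟨⟨α, β⟩, h⟩ :=
    LinearMap.injective_iff_surjective.1 (interpolationMap_injective hN hX) (v, 0)
  obtain ⟨hvalue, hderiv⟩ := Prod.ext_iff.1 h
  obtain ⟨hα, hβ⟩ := norm_coeff_le_of_interpolantDeriv_eq_zero hN hX zero_le_one
    (fun j => (congrArg norm (congrFun hvalue j)).trans_le (hv j)) (congrFun hderiv)
  exact ⟨α, β, congrFun hvalue, congrFun hderiv,
    fun k => (norm_le_pi_norm α k).trans (by linarith),
    fun k => (norm_le_pi_norm β k).trans (by linarith)⟩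

end HermiteInterpolation

section TaylorBounds

lemma nonneg_of_hasDerivAt_nonneg {f f' : ℝ → ℝ} (hf : ∀ x, HasDerivAt f (f' x) x)
    (h₀ : 0 ≤ f 0) (hf' : ∀ x, 0 ≤ x → 0 ≤ f' x) {x : ℝ} (hx : 0 ≤ x) : 0 ≤ f x := by
  have hmono : MonotoneOn f (Set.Ici 0) := by
    refine monotoneOn_of_deriv_nonneg (convex_Ici 0)
      (fun x _ => (hf x).continuousAt.continuousWithinAt)
      (fun x _ => (hf x).differentiableAt.differentiableWithinAt) fun x hx => ?_
    rw [interior_Ici] at hx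
    exact (hf x).deriv ▸ hf' x hx.le
  exact h₀.trans (hmono Set.self_mem_Ici hx hx)

lemma cos_le_one_sub_sq_add_pow_four {x : ℝ} (hx : 0 ≤ x) :
    Real.cos x ≤ 1 - x ^ 2 / 2 + x ^ 4 / 24 := by
  have hderiv (x : ℝ) : HasDerivAt (fun x => 1 - x ^ 2 / 2 + x ^ 4 / 24 - Real.cos x)
      (-x + x ^ 3 / 6 + Real.sin x) x :=
    (((((hasDerivAt_id' x).fun_pow 2).div_const 2).const_sub 1).fun_add
      (((hasDerivAt_id' x).fun_pow 4).div_const 24)).fun_sub (Real.hasDerivAt_cos x)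
      |>.congr_deriv (by push_cast; ring)
  exact sub_nonneg.1 <| nonneg_of_hasDerivAt_nonneg hderiv (by simp)
    (fun x hx => by linarith [Real.sin_ge_sub_cube hx]) hx

lemma sin_le_sub_cube_add_pow_five {x : ℝ} (hx : 0 ≤ x) :
    Real.sin x ≤ x - x ^ 3 / 6 + x ^ 5 / 120 := by
  have hderiv (x : ℝ) : HasDerivAt (fun x => x - x ^ 3 / 6 + x ^ 5 / 120 - Real.sin x)
      (1 - x ^ 2 / 2 + x ^ 4 / 24 - Real.cos x) x :=
    (((hasDerivAt_id' x).fun_sub (((hasDerivAt_id' x).fun_pow 3).div_const 6)).fun_add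
      (((hasDerivAt_id' x).fun_pow 5).div_const 120)).fun_sub (Real.hasDerivAt_sin x)
      |>.congr_deriv (by push_cast; ring)
  exact sub_nonneg.1 <| nonneg_of_hasDerivAt_nonneg hderiv (by simp)
    (fun x hx => sub_nonneg.2 (cos_le_one_sub_sq_add_pow_four hx)) hx

variable {E : Type*} [NormedAddCommGroup E] [NormedSpace ℝ E] {f f' f'' : ℝ → E} {M r t : ℝ}

lemma norm_sub_le_sq_of_nonneg (hf : ∀ x, HasDerivAt f (f' x) x)
    (hf' : ∀ x, HasDerivAt f' (f'' x) x) (h₀ : f' 0 = 0)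
    (hM : ∀ x, 0 ≤ x → x ≤ r → ‖f'' x‖ ≤ M) (ht : 0 ≤ t) (htr : t ≤ r) :
    ‖f t - f 0‖ ≤ M / 2 * t ^ 2 := by
  have hslope : ∀ s ∈ Set.Icc 0 r, ‖f' s‖ ≤ M * s := fun s hs => by
    simpa [h₀] using norm_image_sub_le_of_norm_deriv_right_le_segment
      (fun x _ => (hf' x).continuousAt.continuousWithinAt) (fun x _ => (hf' x).hasDerivWithinAt)
      (fun x hx => hM x hx.1 hx.2.le) s hs
  refine image_norm_le_of_norm_deriv_right_le_deriv_boundary (f := fun t => f t - f 0)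
    (B := fun t => M / 2 * t ^ 2) (B' := fun t => M * t)
    (fun x _ => ((hf x).sub_const _).continuousAt.continuousWithinAt)
    (fun x _ => ((hf x).sub_const _).hasDerivWithinAt) (by simp)
    (fun x => (((hasDerivAt_id' x).fun_pow 2).const_mul (M / 2)).congr_deriv (by push_cast; ring))
    (fun x hx => hslope x ⟨hx.1, hx.2.le⟩) ⟨ht, htr⟩

lemma norm_sub_le_sq (hf : ∀ x, HasDerivAt f (f' x) x) (hf' : ∀ x, HasDerivAt f' (f'' x) x)
    (h₀ : f' 0 = 0) (hM : ∀ x, |x| ≤ r → ‖f'' x‖ ≤ M) (ht : |t| ≤ r) :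
    ‖f t - f 0‖ ≤ M / 2 * t ^ 2 := by
  rcases le_total 0 t with h | h
  · exact norm_sub_le_sq_of_nonneg hf hf' h₀ (fun x hx hr => hM x (by rwa [abs_of_nonneg hx])) h
      (by rwa [abs_of_nonneg h] at ht)
  · have hreflect := norm_sub_le_sq_of_nonneg (f := fun x => f (-x)) (f' := fun x => -f' (-x))
      (f'' := fun x => f'' (-x)) (M := M) (r := r) (t := -t)
      (fun x => ((hf (-x)).scomp x (hasDerivAt_neg x)).congr_deriv (by simp))
      (fun x => (((hf' (-x)).scomp x (hasDerivAt_neg x)).neg).congr_deriv (by simp))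
      (by simp [h₀]) (fun x hx hr => hM (-x) (by rwa [abs_neg, abs_of_nonneg hx])) (by linarith)
      (by rwa [abs_of_nonpos h] at ht)
    simpa using hreflect

end TaylorBounds

section KernelNearOrigin

variable {N : ℕ} {x : ℝ}

lemma mul_one_sub_sq_le_mul_sin {n z : ℝ} (hn : 64 ≤ n) (hz : 0 ≤ z) :
    z * (1 - 0.00005 * z ^ 2) ≤ n * Real.sin (z / n) := by
  have : 0 < n := by linarith
  have hw : (z / n) ^ 2 ≤ z ^ 2 / 64 ^ 2 := by rw [div_pow]; gcongr
  calc z * (1 - 0.00005 * z ^ 2) ≤ z * (1 - (z / n) ^ 2 / 6) := by gcongr; nlinarith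
    _ = n * (z / n - (z / n) ^ 3 / 6) := by field_simp
    _ ≤ n * Real.sin (z / n) := by gcongr; exact Real.sin_ge_sub_cube (by positivity)

lemma sin_le_mul_one_sub_sq {z : ℝ} (hz : 0 ≤ z) (hz₂ : z ^ 2 ≤ 2.468) :
    Real.sin z ≤ z * (1 - 0.00005 * z ^ 2) * (1 - 0.145 * z ^ 2) := by
  calc Real.sin z ≤ z - z ^ 3 / 6 + z ^ 5 / 120 := sin_le_sub_cube_add_pow_five hz
    _ = z * (1 - z ^ 2 / 6 + (z ^ 2) ^ 2 / 120) := by ring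
    _ ≤ z * ((1 - 0.00005 * z ^ 2) * (1 - 0.145 * z ^ 2)) := by
        gcongr
        nlinarith [mul_le_mul_of_nonneg_left hz₂ (sq_nonneg z)]
    _ = _ := (mul_assoc ..).symm

lemma dirichlet_bounds_of_pos (hN : 64 ≤ N) (hx : 0 < x) (hx' : x ≤ 0.5) :
    0 ≤ dirichlet N x ∧ dirichlet N x ≤ 1 - 0.145 * (π * x) ^ 2 := by
  have hz : 0 < π * x := by positivity
  have hz₁ : π * x ≤ 1.5709 := by nlinarith [Real.pi_lt_d4, Real.pi_pos]
  have hz₂ : (π * x) ^ 2 ≤ 2.468 := by nlinarith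
  have hmodulus := mul_one_sub_sq_le_mul_sin (n := N) (by exact_mod_cast hN) hz.le
  have hsin := sin_le_mul_one_sub_sq hz.le hz₂
  have hsin₀ := Real.sin_nonneg_of_nonneg_of_le_pi hz.le (by linarith [Real.pi_gt_three])
  have hidentity := mul_sin_mul_dirichlet (by lia : 0 < N) x
  have hlower : 0 < π * x * (1 - 0.00005 * (π * x) ^ 2) := mul_pos hz (by linarith)
  have hnonneg : 0 ≤ dirichlet N x :=
    nonneg_of_mul_nonneg_right (hidentity ▸ hsin₀) (hlower.trans_le hmodulus)
  refine ⟨hnonneg, le_of_mul_le_mul_left ?_ hlower⟩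
  calc π * x * (1 - 0.00005 * (π * x) ^ 2) * dirichlet N x
      ≤ N * Real.sin (π * x / N) * dirichlet N x := by gcongr
    _ = Real.sin (π * x) := hidentity
    _ ≤ _ := hsin

lemma dirichlet_bounds (hN : 64 ≤ N) (hx : |x| ≤ 0.5) :
    0 ≤ dirichlet N x ∧ dirichlet N x ≤ 1 - 0.145 * (π * x) ^ 2 := by
  rcases eq_or_ne x 0 with rfl | h₀
  · rw [dirichlet_zero (by lia)]; norm_num
  · simpa only [dirichlet_abs, mul_pow, sq_abs] using
      dirichlet_bounds_of_pos hN (abs_pos.2 h₀) hx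

lemma dirichletFreq_sq_le {k : ℕ} (hk : k < N) : dirichletFreq N k ^ 2 ≤ π ^ 2 := by
  have hN : (0 : ℝ) < N := by exact_mod_cast (by lia : 0 < N)
  have hk' : (k : ℝ) + 1 ≤ N := by exact_mod_cast hk
  rw [sq_le_sq, dirichletFreq, abs_div, abs_mul, abs_of_pos Real.pi_pos, abs_of_pos hN,
    div_le_iff₀ hN]
  gcongr
  rw [abs_le]
  constructor <;> linarith [(k.cast_nonneg : (0 : ℝ) ≤ k)]

lemma one_sub_sq_div_two_le_dirichlet (hN : 0 < N) (x : ℝ) :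
    1 - (π * x) ^ 2 / 2 ≤ dirichlet N x := by
  have hN₀ : (0 : ℝ) < N := by positivity
  rw [dirichlet, one_div, ← div_eq_inv_mul, le_div_iff₀ hN₀]
  calc (1 - (π * x) ^ 2 / 2) * N = ∑ k ∈ Finset.range N, (1 - (π * x) ^ 2 / 2) := by
        rw [Finset.sum_const, Finset.card_range, nsmul_eq_mul, mul_comm]
    _ ≤ ∑ k ∈ Finset.range N, Real.cos (dirichletFreq N k * x) := by
        refine Finset.sum_le_sum fun k hk => ?_
        refine le_trans ?_ Real.one_sub_sq_div_two_le_cos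
        rw [mul_pow, mul_pow]
        gcongr 1 - ?_ * x ^ 2 / 2
        exact dirichletFreq_sq_le (Finset.mem_range.1 hk)

lemma abs_sinCoord_le (hN : 0 < N) (x : ℝ) : |sinCoord N x| ≤ |x| := by
  have : (0 : ℝ) < N := by positivity
  have hscale : 0 < N / (2 * π) := by positivity
  calc |sinCoord N x| = N / (2 * π) * |Real.sin (2 * π / N * x)| := by
        rw [sinCoord, abs_mul, abs_of_pos hscale]
    _ ≤ N / (2 * π) * |2 * π / N * x| := by gcongr N / (2 * π) * ?_; exact Real.abs_sin_le_abs
    _ = |N / (2 * π) * (2 * π / N * x)| := by rw [abs_mul _ (2 * π / N * x), abs_of_pos hscale]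
    _ = |x| := congrArg abs (by field_simp)

lemma dirichlet_le_one_sub_sq (hN : 64 ≤ N) (hx : |x| ≤ 0.5) :
    dirichlet N x ≤ 1 - 1.431 * x ^ 2 := by
  nlinarith [dirichlet_bounds hN hx, le_pi_sq, sq_nonneg x]

lemma one_sub_sq_le_dirichlet (hN : 0 < N) (x : ℝ) : 1 - 4.935 * x ^ 2 ≤ dirichlet N x := by
  nlinarith [one_sub_sq_div_two_le_dirichlet hN x, pi_sq_le, sq_nonneg x]

lemma jackson_nonneg (N : ℕ) (x : ℝ) : 0 ≤ jackson N x := by unfold jackson; positivity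

lemma le_one_sub_jackson (hN : 64 ≤ N) (hx : |x| ≤ 0.2) : 5.2 * x ^ 2 ≤ 1 - jackson N x := by
  have hx₂ : x ^ 2 ≤ 0.04 := by rw [← sq_abs x]; nlinarith [abs_nonneg x]
  have hx₅ : |x| ≤ 0.5 := by linarith
  have hsq : (1 - 1.431 * x ^ 2) ^ 2 ≤ 1 - 2.78 * x ^ 2 := by nlinarith [sq_nonneg x]
  have hpow : jackson N x ≤ 1 - 5.2 * x ^ 2 :=
    calc jackson N x ≤ (1 - 1.431 * x ^ 2) ^ 4 :=
          pow_le_pow_left₀ (dirichlet_bounds hN hx₅).1 (dirichlet_le_one_sub_sq hN hx₅) 4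
      _ = ((1 - 1.431 * x ^ 2) ^ 2) ^ 2 := by ring
      _ ≤ (1 - 2.78 * x ^ 2) ^ 2 := by gcongr
      _ ≤ 1 - 5.2 * x ^ 2 := by nlinarith [sq_nonneg x]
  linarith

lemma one_sub_jackson_le (hN : 64 ≤ N) (hx : |x| ≤ 0.5) : 1 - jackson N x ≤ 20 * x ^ 2 := by
  have hbernoulli := one_add_mul_le_pow (a := dirichlet N x - 1)
    (by linarith [dirichlet_bounds hN hx]) 4
  rw [add_sub_cancel] at hbernoulli
  push_cast at hbernoulli
  unfold jackson
  linarith [one_sub_sq_le_dirichlet (by lia : 0 < N) x, sq_nonneg x]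

end KernelNearOrigin

section InterpolantLocalBounds

variable {ι : Type*} [Fintype ι] {N : ℕ} {X : ι → ℝ} {v α β : ι → ℂ} {j : ι} {ξ : ℝ}

lemma halfLineBound_deriv₂Profile_le :
    halfLineBound (deriv₂Profile 1.0445 0.372) (0.995 - 0.2) +
      halfLineBound (deriv₂Profile 1.0445 0.372) 0.995 ≤ 7.938 := by
  unfold halfLineBound cubeSumBound cubeBound cubeTail envelopeBound deriv₂Profile valueProfile
  norm_num

section OffNode

variable [DecidableEq ι]

lemma offNodeSum_deriv_add_slope (hN : 0 < N) (hj : interpolantDeriv N X α β (X j) = 0) :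
    offNodeSum X (fun k => hermiteTermDeriv N (α k) (β k)) j (X j) + β j = 0 := by
  rw [← hj, interpolantDeriv_apply_node hN, add_comm]

lemma norm_offNodeSum_deriv₂_add_le (hN : 64 ≤ N) (hX : ScaledSeparated N X)
    (hα : ∀ k, ‖α k‖ ≤ 1.0445) (hβ : ∀ k, ‖β k‖ ≤ 0.372) (hξ : |ξ| ≤ 0.2) :
    ‖offNodeSum X (fun k => hermiteTermDeriv₂ N (α k) (β k)) j (X j + ξ) +
      β j * sinCoordDeriv₂ N ξ‖ ≤ 7.94 := by
  have hoff := norm_offNodeSum_le hN hX (isProfile_deriv₂Profile (by norm_num) (by norm_num))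
    (fun k => envelopeBounded_hermiteTermDeriv₂ hN (hα k) (hβ k)) (j := j) (t := X j + ξ)
    (r := 0.2) (by norm_num) (by rwa [add_sub_cancel_left])
  have hcoord : |sinCoordDeriv₂ N ξ| ≤ 0.002 := by
    linarith [abs_sinCoordDeriv₂_le hN ξ, abs_sinCoord_le (by lia : 0 < N) ξ]
  have hslope : ‖β j * sinCoordDeriv₂ N ξ‖ ≤ 0.372 * 0.002 := by
    rw [norm_mul, Complex.norm_real, Real.norm_eq_abs]
    exact mul_le_mul (hβ j) hcoord (abs_nonneg _) (by norm_num)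
  linarith [norm_add_le (offNodeSum X (fun k => hermiteTermDeriv₂ N (α k) (β k)) j (X j + ξ))
    (β j * sinCoordDeriv₂ N ξ), halfLineBound_deriv₂Profile_le]

end OffNode

lemma norm_interpolant_expansion_le (hN : 64 ≤ N) (hX : ScaledSeparated N X)
    (h : IsHermiteSolution N X v α β) (j : ι) (hξ : |ξ| ≤ 0.2) :
    ‖interpolant N X α β (X j + ξ) - v j + (1 - jackson N ξ) * (α j + β j * sinCoord N ξ)‖ ≤
      3.97 * ξ ^ 2 := by
  classical
  have hN₀ : 0 < N := by lia
  have htaylor := norm_sub_le_sq (t := ξ) (r := 0.2) (M := 7.94)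
    (f := fun t => offNodeSum X (fun k => hermiteTerm N (α k) (β k)) j (X j + t) +
      β j * sinCoord N t)
    (fun t => ((hasDerivAt_offNodeSum (fun k => hasDerivAt_hermiteTerm hN₀ (α k) (β k)) j
      (X j + t)).comp_const_add (X j) t).fun_add
        ((hasDerivAt_sinCoord hN₀ t).ofReal_comp.const_mul (β j)))
    (fun t => ((hasDerivAt_offNodeSum (fun k => hasDerivAt_hermiteTermDeriv hN₀ (α k) (β k)) j
      (X j + t)).comp_const_add (X j) t).fun_add
        ((hasDerivAt_sinCoordDeriv N t).ofReal_comp.const_mul (β j)))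
    (by simpa [sinCoordDeriv] using offNodeSum_deriv_add_slope hN₀ (h.interpolantDeriv_node j))
    (fun t ht => norm_offNodeSum_deriv₂_add_le hN hX h.norm_value_le h.norm_slope_le ht) hξ
  rw [← h.interpolant_node j, interpolant_apply_node hN₀, interpolant_eq_add_offNodeSum _ _ _ _ j,
    add_sub_cancel_left, hermiteTerm]
  refine (congrArg norm ?_).trans_le (htaylor.trans_eq (by norm_num))
  simp only [sinCoord_zero, Complex.ofReal_zero, mul_zero, add_zero]
  ring

lemma norm_slope_mul_sinCoord_le (hN : 0 < N) {b r : ℝ} {z : ℂ} (hz : ‖z‖ ≤ b) (hξ : |ξ| ≤ r) :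
    ‖z * (sinCoord N ξ : ℂ)‖ ≤ b * r := by
  rw [norm_mul, Complex.norm_real, Real.norm_eq_abs]
  exact mul_le_mul hz ((abs_sinCoord_le hN ξ).trans hξ) (abs_nonneg _) ((norm_nonneg _).trans hz)

lemma norm_interpolant_near_le (hN : 64 ≤ N) (hX : ScaledSeparated N X)
    (h : IsHermiteSolution N X v α β) (hv : ∀ j, ‖v j‖ ≤ 1) (j : ι) (hξ : |ξ| ≤ 0.2) :
    ‖interpolant N X α β (X j + ξ)‖ ≤ 1 - 0.5 * ξ ^ 2 := by
  have hexpansion := norm_interpolant_expansion_le hN hX h j hξ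
  have hgap := le_one_sub_jackson hN hξ
  have hjackson := jackson_nonneg N ξ
  have hmain : ‖(jackson N ξ : ℂ) * v j‖ ≤ jackson N ξ := by
    rw [norm_mul, Complex.norm_of_nonneg hjackson]
    exact mul_le_of_le_one_right hjackson (hv j)
  have hvalue := norm_interpolant_sub_le hN hX h.norm_value_le h.norm_slope_le j
  rw [h.interpolant_node j] at hvalue
  have hslope := norm_slope_mul_sinCoord_le (by lia : 0 < N) (h.norm_slope_le j) hξ
  have hcorrection : ‖((1 - jackson N ξ : ℝ) : ℂ) * (v j - α j - β j * sinCoord N ξ)‖ ≤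
      (1 - jackson N ξ) * 0.1186 := by
    have hgap₀ : 0 ≤ 1 - jackson N ξ := by nlinarith [sq_nonneg ξ]
    rw [norm_mul, Complex.norm_of_nonneg hgap₀]
    gcongr
    linarith [norm_sub_le (v j - α j) (β j * sinCoord N ξ)]
  calc ‖interpolant N X α β (X j + ξ)‖
      = ‖(interpolant N X α β (X j + ξ) - v j +
          (1 - jackson N ξ) * (α j + β j * sinCoord N ξ)) + jackson N ξ * v j +
          ((1 - jackson N ξ : ℝ) : ℂ) * (v j - α j - β j * sinCoord N ξ)‖ := by
        congr 1; push_cast; ring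
    _ ≤ 3.97 * ξ ^ 2 + jackson N ξ + (1 - jackson N ξ) * 0.1186 :=
        norm_add₃_le.trans (by gcongr)
    _ ≤ 1 - 0.5 * ξ ^ 2 := by linarith [sq_nonneg ξ]

lemma norm_interpolant_sub_node_le (hN : 64 ≤ N) (hX : ScaledSeparated N X)
    (h : IsHermiteSolution N X v α β) (j : ι) (hξ : |ξ| ≤ 0.2) :
    ‖interpolant N X α β (X j + ξ) - v j‖ ≤ 40 * |ξ| := by
  have hexpansion := norm_interpolant_expansion_le hN hX h j hξ
  have hgap := one_sub_jackson_le (x := ξ) hN (by linarith)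
  have hgap₀ : 0 ≤ 1 - jackson N ξ := by nlinarith [le_one_sub_jackson hN hξ, sq_nonneg ξ]
  have hslope := norm_slope_mul_sinCoord_le (by lia : 0 < N) (h.norm_slope_le j) hξ
  have hcorrection : ‖((1 - jackson N ξ : ℝ) : ℂ) * (α j + β j * sinCoord N ξ)‖ ≤
      20 * ξ ^ 2 * 1.2 := by
    rw [norm_mul, Complex.norm_of_nonneg hgap₀]
    gcongr
    linarith [norm_add_le (α j) (β j * sinCoord N ξ), h.norm_value_le j]
  have hsq : ξ ^ 2 ≤ 0.2 * |ξ| := by rw [← sq_abs ξ]; nlinarith [abs_nonneg ξ]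
  calc ‖interpolant N X α β (X j + ξ) - v j‖
      = ‖(interpolant N X α β (X j + ξ) - v j +
          (1 - jackson N ξ) * (α j + β j * sinCoord N ξ)) -
          ((1 - jackson N ξ : ℝ) : ℂ) * (α j + β j * sinCoord N ξ)‖ := by
        congr 1; push_cast; ring
    _ ≤ 3.97 * ξ ^ 2 + 20 * ξ ^ 2 * 1.2 := (norm_sub_le _ _).trans (by gcongr)
    _ ≤ 40 * |ξ| := by nlinarith [abs_nonneg ξ]

lemma norm_interpolant_annulus_le (hN : 64 ≤ N) (hX : ScaledSeparated N X)
    (h : IsHermiteSolution N X v α β) (j : ι) {lo hi : ℝ} (hlo : 0 ≤ lo) (hhi : hi ≤ 0.5)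
    (hξ : lo ≤ |ξ|) (hξ' : |ξ| ≤ hi) :
    ‖interpolant N X α β (X j + ξ)‖ ≤
      (1 - 0.145 * (9.8695 * lo ^ 2)) ^ 4 * (1.0445 + 0.372 * hi) +
        (halfLineBound (valueProfile 1.0445 0.372) (0.995 - hi) +
          halfLineBound (valueProfile 1.0445 0.372) 0.995) := by
  classical
  have hoff := norm_offNodeSum_le hN hX (isProfile_valueProfile (by norm_num) (by norm_num))
    (fun k => envelopeBounded_hermiteTerm (by lia) (h.norm_value_le k) (h.norm_slope_le k))
    (j := j) (t := X j + ξ) (r := hi) (by linarith) (by rwa [add_sub_cancel_left])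
  obtain ⟨hdirichlet, hdirichlet'⟩ := dirichlet_bounds hN (hξ'.trans hhi)
  have hlo₂ : 9.8695 * lo ^ 2 ≤ (π * ξ) ^ 2 := by
    rw [mul_pow, ← sq_abs ξ]
    gcongr
    exact le_pi_sq
  have hslope := norm_slope_mul_sinCoord_le (by lia : 0 < N) (h.norm_slope_le j) hξ'
  rw [interpolant_eq_add_offNodeSum _ _ _ _ j, add_sub_cancel_left]
  refine (norm_add_le _ _).trans (add_le_add ?_ hoff)
  rw [hermiteTerm, norm_mul, Complex.norm_of_nonneg (jackson_nonneg N ξ), jackson]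
  gcongr
  · linarith
  · exact (norm_add_le _ _).trans (add_le_add (h.norm_value_le j) hslope)

lemma norm_interpolant_middle_le (hN : 64 ≤ N) (hX : ScaledSeparated N X)
    (h : IsHermiteSolution N X v α β) (j : ι) (hξ : 0.2 ≤ |ξ|) (hξ' : |ξ| ≤ 0.5) :
    ‖interpolant N X α β (X j + ξ)‖ ≤ 0.98 := by
  have bound {lo hi : ℝ} (hlo : 0 ≤ lo) (hhi : hi ≤ 0.5) (h₁ : lo ≤ |ξ|) (h₂ : |ξ| ≤ hi) :=
    norm_interpolant_annulus_le hN hX h j hlo hhi h₁ h₂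
  unfold halfLineBound cubeSumBound cubeBound cubeTail envelopeBound valueProfile at bound
  rcases le_total |ξ| 0.25 with h₁ | h₁
  · exact (bound (by norm_num) (by norm_num) hξ h₁).trans (by norm_num)
  rcases le_total |ξ| 0.35 with h₂ | h₂
  · exact (bound (by norm_num) (by norm_num) h₁ h₂).trans (by norm_num)
  · exact (bound (by norm_num) le_rfl h₂ hξ').trans (by norm_num)

lemma norm_interpolant_far_le (hN : 64 ≤ N) (hX : ScaledSeparated N X)
    (h : IsHermiteSolution N X v α β) {x : ℝ} (hx : ∀ k, ∀ n : ℤ, 0.5 ≤ |x - X k - n * N|) :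
    ‖interpolant N X α β x‖ ≤ 0.98 := by
  refine (norm_sum_le_of_half_le hN hX (isProfile_valueProfile (by norm_num) (by norm_num))
    (fun k => envelopeBounded_hermiteTerm (by lia) (h.norm_value_le k) (h.norm_slope_le k))
    hx).trans ?_
  unfold halfLineBound cubeSumBound cubeBound cubeTail envelopeBound valueProfile
  norm_num

end InterpolantLocalBounds

section Phase

/-- The character `x ↦ e^{-2πix}` through which frequencies enter `fourierCoeffs` and `wFun`. -/
def phase (x : ℝ) : ℂ := Complex.exp ((-2 * π * x : ℝ) * I)

lemma phase_add (x y : ℝ) : phase (x + y) = phase x * phase y := by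
  unfold phase
  rw [← Complex.exp_add]
  congr 1
  push_cast
  ring

lemma norm_phase (x : ℝ) : ‖phase x‖ = 1 := Complex.norm_exp_ofReal_mul_I _

lemma phase_pow (x : ℝ) (k : ℕ) : phase x ^ k = phase (k * x) := by
  unfold phase
  rw [← Complex.exp_nat_mul]
  congr 1
  push_cast
  ring

lemma phase_intCast (n : ℤ) : phase n = 1 := by
  unfold phase
  exact Complex.exp_eq_one_iff.2 ⟨-n, by push_cast; ring⟩

lemma phase_sub_intCast (x : ℝ) (n : ℤ) : phase (x - n) = phase x := by
  simpa [phase_intCast] using (phase_add (x - n) n).symm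

lemma phase_neg_mul_phase (x : ℝ) : phase (-x) * phase x = 1 := by
  rw [← phase_add, neg_add_cancel]
  exact_mod_cast phase_intCast 0

lemma norm_phase_sub_one_le (x : ℝ) : ‖phase x - 1‖ ≤ 2 * π * |x| := by
  have h := Real.norm_exp_I_mul_ofReal_sub_one_le (x := -2 * π * x)
  rwa [mul_comm I, Real.norm_eq_abs, abs_mul, abs_mul, abs_neg, abs_two,
    abs_of_pos Real.pi_pos] at h

lemma exp_eq_phase_pow (k : ℕ) (x : ℝ) : Complex.exp (-2 * π * I * k * x) = phase x ^ k := by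
  rw [phase_pow, phase]
  congr 1
  push_cast
  ring

lemma exists_phase_eq {z : ℂ} (hz : ‖z‖ = 1) : ∃ x, phase x = z := by
  refine ⟨-z.arg / (2 * π), ?_⟩
  have harg : -2 * π * (-z.arg / (2 * π)) = z.arg := by field_simp
  rw [phase, harg]
  simpa [hz] using Complex.norm_mul_exp_arg_mul_I z

lemma two_mul_cos_eq_phase_add (x : ℝ) :
    2 * (Real.cos (2 * π * x) : ℂ) = phase x + phase (-x) := by
  rw [Complex.ofReal_cos, Complex.two_cos, add_comm, phase, phase]
  congr 2 <;> push_cast <;> ring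

lemma two_I_mul_sin_eq_phase_sub (x : ℝ) :
    2 * I * (Real.sin (2 * π * x) : ℂ) = phase (-x) - phase x := by
  have hI := Complex.two_sin (2 * π * x : ℝ)
  have h₁ : Complex.exp ((2 * π * x : ℝ) * I) = phase (-x) := by
    rw [phase]; congr 2; push_cast; ring
  have h₂ : Complex.exp (-(2 * π * x : ℝ) * I) = phase x := by
    rw [phase]; congr 1; push_cast; ring
  rw [h₁, h₂] at hI
  rw [Complex.ofReal_sin]
  linear_combination I * hI + (phase x - phase (-x)) * I_mul_I

end Phase

section InterpolantPolynomial

open Polynomial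

variable {ι : Type*} [Fintype ι] {N : ℕ}

lemma sum_phase_reflect (N : ℕ) (u : ℝ) :
    ∑ k ∈ Finset.range N, phase (-((k - (N - 1) / 2) * u)) =
      ∑ k ∈ Finset.range N, phase ((k - (N - 1) / 2) * u) := by
  rw [← Finset.sum_range_reflect]
  refine Finset.sum_congr rfl fun k hk => ?_
  have hk := Finset.mem_range.1 hk
  rw [Nat.cast_sub (by lia), Nat.cast_sub (by lia)]
  congr 1
  push_cast
  ring

lemma phase_mul_dirichlet (hN : 0 < N) (u : ℝ) :
    phase ((N - 1) / 2 * u) * (dirichlet N (N * u) : ℂ) =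
      1 / N * ∑ k ∈ Finset.range N, phase u ^ k := by
  have hfreq (k : ℕ) :
      dirichletFreq N k * (N * u) = 2 * π * ((k - (N - 1) / 2) * u) := by
    unfold dirichletFreq; field_simp
  have hcos : 2 * ∑ k ∈ Finset.range N, (Real.cos (dirichletFreq N k * (N * u)) : ℂ) =
      2 * ∑ k ∈ Finset.range N, phase ((k - (N - 1) / 2) * u) := by
    simp only [Finset.mul_sum, hfreq, two_mul_cos_eq_phase_add, Finset.sum_add_distrib,
      sum_phase_reflect]
    rw [← Finset.mul_sum, two_mul]
  have hsum : phase ((N - 1) / 2 * u) * ∑ k ∈ Finset.range N, phase ((k - (N - 1) / 2) * u) =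
      ∑ k ∈ Finset.range N, phase u ^ k := by
    rw [Finset.mul_sum]
    refine Finset.sum_congr rfl fun k _ => ?_
    rw [← phase_add, phase_pow]
    congr 1
    ring
  rw [dirichlet, ← hsum, ← mul_left_cancel₀ two_ne_zero hcos]
  push_cast
  ring

lemma sinCoord_mul_phase (hN : 0 < N) (u : ℝ) :
    (sinCoord N (N * u) : ℂ) * phase u = N / (4 * π * I) * (1 - phase u ^ 2) := by
  have harg : 2 * π / N * (N * u) = 2 * π * u := by field_simp
  have hN' : (N : ℂ) ≠ 0 := by exact_mod_cast hN.ne'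
  rw [sinCoord, harg]
  push_cast [- Complex.ofReal_sin]
  field_simp
  linear_combination 2 * phase u * two_I_mul_sin_eq_phase_sub u + 2 * phase_neg_mul_phase u

/-- The polynomial whose value at `e^{-2πiu}` is, up to the unimodular factor
`e^{-2πi(2N-1)u}`, the value of `hermiteTerm N α β` at `N * u`. -/
def hermitePolynomial (N : ℕ) (α β : ℂ) : ℂ[X] :=
  (C (1 / (N : ℂ)) * ∑ k ∈ Finset.range N, X ^ k) ^ 4 *
    (C α * X + C (β * (N / (4 * π * I))) * (1 - X ^ 2))

lemma natDegree_hermitePolynomial_le (hN : 0 < N) (α β : ℂ) :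
    (hermitePolynomial N α β).natDegree ≤ 4 * N - 2 := by
  have hgeom : (C (1 / (N : ℂ)) * ∑ k ∈ Finset.range N, X ^ k : ℂ[X]).natDegree ≤ N - 1 := by
    refine (natDegree_C_mul_le _ _).trans (natDegree_sum_le_of_forall_le _ _ fun k hk => ?_)
    rw [natDegree_X_pow]
    exact Nat.le_pred_of_lt (Finset.mem_range.1 hk)
  have hquad : (C α * X + C (β * (N / (4 * π * I))) * (1 - X ^ 2) : ℂ[X]).natDegree ≤ 2 := by
    compute_degree
  have := natDegree_mul_le_of_le (natDegree_pow_le_of_le 4 hgeom) hquad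
  unfold hermitePolynomial
  lia

lemma eval_hermitePolynomial (hN : 0 < N) (α β : ℂ) (u : ℝ) :
    (hermitePolynomial N α β).eval (phase u) =
      phase ((2 * N - 1) * u) * hermiteTerm N α β (N * u) := by
  have hphase : phase ((2 * N - 1) * u) = phase ((N - 1) / 2 * u) ^ 4 * phase u := by
    rw [phase_pow, ← phase_add]
    congr 1
    push_cast
    ring
  simp only [hermitePolynomial, eval_mul, eval_pow, eval_C, eval_finsetSum, eval_X, eval_add,
    eval_sub, eval_one]
  rw [← phase_mul_dirichlet hN u, hphase, hermiteTerm, jackson]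
  push_cast
  linear_combination
    (-phase ((N - 1) / 2 * u) ^ 4 * (dirichlet N (N * u) : ℂ) ^ 4 * β) * sinCoord_mul_phase hN u

/-- The polynomial whose value at `e^{-2πiu}` is, up to the unimodular factor
`e^{-2πi(2N-1)u}`, the value at `N * u` of the interpolant with nodes `N * t j`. -/
def interpolantPolynomial (N : ℕ) (t : ι → ℝ) (α β : ι → ℂ) : ℂ[X] :=
  ∑ k, C (phase ((2 * N - 1) * t k)) *
    (hermitePolynomial N (α k) (β k)).comp (C (phase (-t k)) * X)

lemma natDegree_interpolantPolynomial_le (hN : 0 < N) (t : ι → ℝ) (α β : ι → ℂ) :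
    (interpolantPolynomial N t α β).natDegree ≤ 4 * N - 2 := by
  refine natDegree_sum_le_of_forall_le _ _ fun k _ => ?_
  refine (natDegree_C_mul_le _ _).trans (natDegree_comp_le.trans ?_)
  simpa using Nat.mul_le_mul (natDegree_hermitePolynomial_le hN (α k) (β k))
    (show (C (phase (-t k)) * X : ℂ[X]).natDegree ≤ 1 by compute_degree)

lemma eval_interpolantPolynomial (hN : 0 < N) (t : ι → ℝ) (α β : ι → ℂ) (u : ℝ) :
    (interpolantPolynomial N t α β).eval (phase u) =
      phase ((2 * N - 1) * u) * interpolant N (fun j => N * t j) α β (N * u) := by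
  rw [interpolantPolynomial, eval_finsetSum, interpolant, Finset.mul_sum]
  refine Finset.sum_congr rfl fun k _ => ?_
  rw [eval_mul, eval_C, eval_comp, eval_mul, eval_C, eval_X, ← phase_add,
    eval_hermitePolynomial hN, ← mul_assoc, ← phase_add]
  congr 2 <;> ring

end InterpolantPolynomial

section TrigPoly

/-- The trigonometric polynomial `∑ k, c k e^{-2πiks}`. -/
def trigPoly {m : ℕ} (c : Fin m → ℂ) (s : ℝ) : ℂ := ∑ k, c k * phase s ^ (k : ℕ)

lemma trigPoly_sub_intCast {m : ℕ} (c : Fin m → ℂ) (s : ℝ) (n : ℤ) :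
    trigPoly c (s - n) = trigPoly c s := by
  simp only [trigPoly, phase_sub_intCast]

lemma trigPoly_coeff {m : ℕ} {Q : Polynomial ℂ} (hQ : Q.natDegree < m) (s : ℝ) :
    trigPoly (fun k : Fin m => Q.coeff k) s = Q.eval (phase s) := by
  rw [Polynomial.eval_eq_sum_range' hQ, trigPoly,
    Fin.sum_univ_eq_sum_range fun k => Q.coeff k * phase s ^ k]

lemma sum_sq_norm_coeff_le_one {m : ℕ} {Q : Polynomial ℂ} (hQ : Q.natDegree < m)
    (h : ∀ u, ‖Q.eval (phase u)‖ ≤ 1) : ∑ k : Fin m, ‖Q.coeff k‖ ^ 2 ≤ 1 := by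
  have hsum := Q.sum_over_range' (f := fun _ z => ‖z‖ ^ 2) (by simp) m hQ
  rw [Fin.sum_univ_eq_sum_range fun k => ‖Q.coeff k‖ ^ 2, ← hsum, Polynomial.sum_def,
    Polynomial.sum_sq_norm_coeff_eq_circleAverage]
  refine Real.circleAverage_mono_on_of_le_circle ?_ fun z hz => ?_
  · exact ContinuousOn.circleIntegrable zero_le_one (by fun_prop)
  · obtain ⟨u, rfl⟩ := exists_phase_eq (by simpa using hz)
    exact pow_le_one₀ (norm_nonneg _) (h u)

end TrigPoly

section DistT

lemma distT_eq_norm (t : ℝ) : distT t = ‖(t : UnitAddCircle)‖ := by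
  rw [UnitAddCircle.norm_eq]
  exact le_antisymm (ciInf_le ⟨0, by rintro _ ⟨n, rfl⟩; exact abs_nonneg _⟩ _)
    (le_ciInf fun n => round_le t n)

lemma distT_le_abs_sub (t : ℝ) (n : ℤ) : distT t ≤ |t - n| := by
  rw [distT_eq_norm, UnitAddCircle.norm_eq]
  exact round_le t n

lemma distT_nonneg (t : ℝ) : 0 ≤ distT t := by
  rw [distT_eq_norm]
  exact norm_nonneg _

lemma distT_sub_comm (s t : ℝ) : distT (s - t) = distT (t - s) := by
  simp only [distT_eq_norm, AddCircle.coe_sub, norm_sub_rev]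

lemma distT_sub_le (a b c : ℝ) : distT (a - c) ≤ distT (a - b) + distT (b - c) := by
  simp only [distT_eq_norm, AddCircle.coe_sub]
  exact norm_sub_le_norm_sub_add_norm_sub _ _ _

lemma exists_int_abs_sub_eq_distT (t s : ℝ) : ∃ n : ℤ, |s - n - t| = distT (t - s) := by
  refine ⟨round (s - t), ?_⟩
  rw [distT_sub_comm, distT_eq_norm, UnitAddCircle.norm_eq]
  congr 1
  ring

end DistT

section DualCertificate

variable {ι : Type*} {m N : ℕ} {t : ι → ℝ} {v α β : ι → ℂ} {j : ι} {s : ℝ}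

/-- The separation condition `Δ(μ) ≥ 4 / (m - 1)` on the nodes `t` of a measure. -/
def NodesSeparated (m : ℕ) (t : ι → ℝ) : Prop :=
  ∀ j k, j ≠ k → 4 / ((m : ℝ) - 1) ≤ distT (t j - t k)

/-- The coefficients of a trigonometric polynomial of degree less than `m` that certifies the
signs `v` at the nodes `t`: it is bounded by `1`, attains `v j` at `t j`, and drops quadratically
away from the nodes. -/
structure IsDualCertificate (t : ι → ℝ) (v : ι → ℂ) (c : Fin m → ℂ) : Prop where
  sum_sq_le : ∑ k, ‖c k‖ ^ 2 ≤ 1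
  trigPoly_node : ∀ j, trigPoly c (t j) = v j
  norm_le_one : ∀ s, ‖trigPoly c s‖ ≤ 1
  norm_near_le : ∀ j s, distT (t j - s) ≤ 0.3298 / (m - 1) →
    ‖trigPoly c s‖ ≤ 1 - m ^ 2 / 50 * distT (t j - s) ^ 2
  norm_sub_node_le : ∀ j s, distT (t j - s) ≤ 0.3298 / (m - 1) →
    ‖trigPoly c s - v j‖ ≤ 30 * m * distT (t j - s)
  norm_far_le : ∀ s, (∀ j, 0.3298 / (m - 1) < distT (t j - s)) → ‖trigPoly c s‖ ≤ 0.997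

lemma NodesSeparated.scaledSeparated (ht : NodesSeparated m t) (hm : 257 ≤ m)
    (hN : m ≤ 4 * N + 2) : ScaledSeparated N fun j => N * t j := fun j k hjk n => by
  have hm' : (257 : ℝ) ≤ m := by exact_mod_cast hm
  have hN' : (m : ℝ) ≤ 4 * N + 2 := by exact_mod_cast hN
  have hm₁ : (0 : ℝ) < m - 1 := by linarith
  calc (0.995 : ℝ) ≤ N * (4 / (m - 1)) := by rw [← mul_div_assoc, le_div_iff₀ hm₁]; linarith
    _ ≤ N * |t j - t k - n| := by gcongr; exact (ht j k hjk).trans (distT_le_abs_sub _ n)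
    _ = |N * t j - N * t k - n * N| := by
      rw [← abs_of_nonneg (Nat.cast_nonneg N : (0 : ℝ) ≤ N), ← abs_mul, Nat.abs_cast]
      congr 1
      ring

variable [Fintype ι]

/-- The coefficients of `interpolantPolynomial`, truncated to degree less than `m`. -/
def certificateCoeff (m N : ℕ) (t : ι → ℝ) (α β : ι → ℂ) : Fin m → ℂ :=
  fun k => (interpolantPolynomial N t α β).coeff k

lemma trigPoly_certificateCoeff (hN : 0 < N) (hm : 4 * N ≤ m + 1) (t : ι → ℝ) (α β : ι → ℂ)
    (s : ℝ) :
    trigPoly (certificateCoeff m N t α β) s =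
      phase ((2 * N - 1) * s) * interpolant N (fun j => N * t j) α β (N * s) := by
  have hdegree := natDegree_interpolantPolynomial_le hN t α β
  rw [← eval_interpolantPolynomial hN]
  exact trigPoly_coeff (by lia) s

lemma norm_trigPoly_certificateCoeff (hN : 0 < N) (hm : 4 * N ≤ m + 1) (t : ι → ℝ)
    (α β : ι → ℂ) (s : ℝ) :
    ‖trigPoly (certificateCoeff m N t α β) s‖ =
      ‖interpolant N (fun j => N * t j) α β (N * s)‖ := by
  rw [trigPoly_certificateCoeff hN hm, norm_mul, norm_phase, one_mul]

/-- The modulation of the prescribed values that compensates for the unimodular factor relating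
`interpolantPolynomial` to the interpolant. -/
def modulate (N : ℕ) (t : ι → ℝ) (v : ι → ℂ) : ι → ℂ :=
  fun j => phase (-((2 * N - 1) * t j)) * v j

lemma trigPoly_certificateCoeff_near_le (hN : 64 ≤ N) (hm : 4 * N ≤ m + 1)
    (hX : ScaledSeparated N fun j => N * t j)
    (h : IsHermiteSolution N (fun j => N * t j) (modulate N t v) α β) (hv : ∀ j, ‖v j‖ ≤ 1)
    (hs : N * distT (t j - s) ≤ 0.2) :
    ‖trigPoly (certificateCoeff m N t α β) s‖ ≤ 1 - 0.5 * (N * distT (t j - s)) ^ 2 := by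
  obtain ⟨n, hn⟩ := exists_int_abs_sub_eq_distT (t j) s
  have habs : |N * (s - n - t j)| = N * distT (t j - s) := by rw [abs_mul, Nat.abs_cast, hn]
  have hnear := norm_interpolant_near_le hN hX h
    (fun j => by rw [modulate, norm_mul, norm_phase, one_mul]; exact hv j) j (habs.trans_le hs)
  rw [← trigPoly_sub_intCast _ s n, norm_trigPoly_certificateCoeff (by lia) hm, ← habs, sq_abs]
  convert hnear using 3
  ring

lemma trigPoly_certificateCoeff_sub_node_le (hN : 64 ≤ N) (hm : 4 * N ≤ m + 1)
    (hX : ScaledSeparated N fun j => N * t j)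
    (h : IsHermiteSolution N (fun j => N * t j) (modulate N t v) α β) (hv : ∀ j, ‖v j‖ ≤ 1)
    (hs : N * distT (t j - s) ≤ 0.2) :
    ‖trigPoly (certificateCoeff m N t α β) s - v j‖ ≤ 54 * (N * distT (t j - s)) := by
  obtain ⟨n, hn⟩ := exists_int_abs_sub_eq_distT (t j) s
  have habs : |N * (s - n - t j)| = N * distT (t j - s) := by rw [abs_mul, Nat.abs_cast, hn]
  have hvalue := norm_interpolant_sub_node_le hN hX h j (habs.trans_le hs)
  have hphase : ‖phase ((2 * N - 1) * (s - n - t j)) - 1‖ ≤ 14 * |N * (s - n - t j)| := by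
    have hN₁ : (64 : ℝ) ≤ N := by exact_mod_cast hN
    refine (norm_phase_sub_one_le _).trans ?_
    rw [abs_mul, abs_mul, abs_of_nonneg (by linarith : (0 : ℝ) ≤ 2 * N - 1), Nat.abs_cast,
      ← mul_assoc, ← mul_assoc]
    exact mul_le_mul_of_nonneg_right (by nlinarith [Real.pi_lt_d2, Real.pi_pos]) (abs_nonneg _)
  have hsplit : trigPoly (certificateCoeff m N t α β) (s - n) - v j =
      phase ((2 * N - 1) * (s - n)) *
        (interpolant N (fun j => N * t j) α β (N * t j + N * (s - n - t j)) - modulate N t v j) +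
        (phase ((2 * N - 1) * (s - n - t j)) - 1) * v j := by
    have hadd : phase ((2 * N - 1) * (s - n - t j)) =
        phase ((2 * N - 1) * (s - n)) * phase (-((2 * N - 1) * t j)) := by
      rw [← phase_add]; congr 1; ring
    have hnode : N * t j + N * (s - n - t j) = N * (s - n) := by ring
    rw [trigPoly_certificateCoeff (by lia) hm, hadd, hnode, modulate]
    ring
  rw [← trigPoly_sub_intCast _ s n, hsplit, ← habs]
  calc _ ≤ 1 * (40 * |N * (s - n - t j)|) + 14 * |N * (s - n - t j)| * 1 := by
        refine (norm_add_le _ _).trans ?_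
        rw [norm_mul, norm_mul, norm_phase]
        gcongr
        exact hv j
    _ = 54 * |N * (s - n - t j)| := by ring

lemma trigPoly_certificateCoeff_far_le (hN : 64 ≤ N) (hm : 4 * N ≤ m + 1)
    (hX : ScaledSeparated N fun j => N * t j)
    (h : IsHermiteSolution N (fun j => N * t j) (modulate N t v) α β)
    (hs : ∀ j, 0.2 ≤ N * distT (t j - s)) :
    ‖trigPoly (certificateCoeff m N t α β) s‖ ≤ 0.98 := by
  by_cases hfar : ∃ j, N * distT (t j - s) ≤ 0.5
  · obtain ⟨j, hj⟩ := hfar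
    obtain ⟨n, hn⟩ := exists_int_abs_sub_eq_distT (t j) s
    have habs : |N * (s - n - t j)| = N * distT (t j - s) := by rw [abs_mul, Nat.abs_cast, hn]
    have hmiddle := norm_interpolant_middle_le hN hX h j (habs ▸ hs j) (habs.trans_le hj)
    rw [← trigPoly_sub_intCast _ s n, norm_trigPoly_certificateCoeff (by lia) hm]
    convert hmiddle using 3
    ring
  · push Not at hfar
    rw [norm_trigPoly_certificateCoeff (by lia) hm]
    refine norm_interpolant_far_le hN hX h fun k n => (hfar k).le.trans ?_
    have habs : |N * s - N * t k - n * N| = N * |s - t k - n| := by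
      rw [← Nat.abs_cast N, ← abs_mul, Nat.abs_cast]
      congr 1
      ring
    rw [habs, distT_sub_comm]
    gcongr
    exact distT_le_abs_sub _ n

lemma norm_trigPoly_certificateCoeff_le_one (hN : 64 ≤ N) (hm : 4 * N ≤ m + 1)
    (hX : ScaledSeparated N fun j => N * t j)
    (h : IsHermiteSolution N (fun j => N * t j) (modulate N t v) α β) (hv : ∀ j, ‖v j‖ ≤ 1)
    (s : ℝ) : ‖trigPoly (certificateCoeff m N t α β) s‖ ≤ 1 := by
  by_cases hs : ∃ j, N * distT (t j - s) ≤ 0.2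
  · obtain ⟨j, hj⟩ := hs
    exact (trigPoly_certificateCoeff_near_le hN hm hX h hv hj).trans
      (sub_le_self _ (by positivity))
  · push Not at hs
    exact (trigPoly_certificateCoeff_far_le hN hm hX h fun j => (hs j).le).trans (by norm_num)

lemma trigPoly_certificateCoeff_le_of_le (hN : 64 ≤ N) (hm : 4 * N ≤ m + 1)
    (hX : ScaledSeparated N fun j => N * t j)
    (h : IsHermiteSolution N (fun j => N * t j) (modulate N t v) α β) (hv : ∀ j, ‖v j‖ ≤ 1)
    (hs : ∀ j, 0.08 ≤ N * distT (t j - s)) :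
    ‖trigPoly (certificateCoeff m N t α β) s‖ ≤ 0.997 := by
  by_cases hmid : ∃ j, N * distT (t j - s) ≤ 0.2
  · obtain ⟨j, hj⟩ := hmid
    refine (trigPoly_certificateCoeff_near_le hN hm hX h hv hj).trans ?_
    nlinarith [hs j]
  · push Not at hmid
    exact (trigPoly_certificateCoeff_far_le hN hm hX h fun j => (hmid j).le).trans (by norm_num)

lemma isDualCertificate_certificateCoeff (hN : 64 ≤ N) (hm : 4 * N ≤ m + 1) (hm' : m ≤ 4 * N + 2)
    (hX : ScaledSeparated N fun j => N * t j)
    (h : IsHermiteSolution N (fun j => N * t j) (modulate N t v) α β) (hv : ∀ j, ‖v j‖ ≤ 1) :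
    IsDualCertificate t v (certificateCoeff m N t α β) := by
  have hmN : (m : ℝ) ≤ 4 * N + 2 := by exact_mod_cast hm'
  have hNm : 4 * (N : ℝ) ≤ m + 1 := by exact_mod_cast hm
  have hN' : (64 : ℝ) ≤ N := by exact_mod_cast hN
  have hm₁ : (0 : ℝ) < m - 1 := by linarith
  have hle := norm_trigPoly_certificateCoeff_le_one hN hm hX h hv
  have hdegree := natDegree_interpolantPolynomial_le (by lia : 0 < N) t α β
  have hnear {j : ι} {s : ℝ} (hs : distT (t j - s) ≤ 0.3298 / (m - 1)) :
      N * distT (t j - s) ≤ 0.2 := by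
    rw [le_div_iff₀ hm₁] at hs
    nlinarith [distT_nonneg (t j - s)]
  refine ⟨?_, fun j => ?_, hle, fun j s hs => ?_, fun j s hs => ?_, fun s hs => ?_⟩
  · exact sum_sq_norm_coeff_le_one (by lia) fun u =>
      trigPoly_coeff (by lia : (interpolantPolynomial N t α β).natDegree < m) u ▸ hle u
  · rw [trigPoly_certificateCoeff (by lia) hm, h.interpolant_node, modulate, ← mul_assoc,
      mul_comm (phase _), phase_neg_mul_phase, one_mul]
  · refine (trigPoly_certificateCoeff_near_le hN hm hX h hv (hnear hs)).trans ?_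
    rw [mul_pow, ← mul_assoc]
    gcongr
    nlinarith
  · refine (trigPoly_certificateCoeff_sub_node_le hN hm hX h hv (hnear hs)).trans ?_
    nlinarith [distT_nonneg (t j - s)]
  · refine trigPoly_certificateCoeff_le_of_le hN hm hX h hv fun j => ?_
    have hsj := hs j
    rw [div_lt_iff₀ hm₁] at hsj
    nlinarith [distT_nonneg (t j - s)]

omit [Fintype ι] in
lemma exists_isDualCertificate [Finite ι] (hm : 257 ≤ m)
    (ht : NodesSeparated m t) (hv : ∀ j, ‖v j‖ ≤ 1) :
    ∃ c : Fin m → ℂ, IsDualCertificate t v c := by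
  have := Fintype.ofFinite ι
  obtain ⟨N, hNm, hmN⟩ : ∃ N : ℕ, 4 * N ≤ m + 1 ∧ m ≤ 4 * N + 2 :=
    ⟨(m + 1) / 4, by lia, by lia⟩
  have hN : 64 ≤ N := by lia
  have hX := ht.scaledSeparated hm hmN
  obtain ⟨α, β, h⟩ := exists_isHermiteSolution hN hX (v := modulate N t v)
    fun j => by rw [modulate, norm_mul, norm_phase, one_mul]; exact hv j
  exact ⟨_, isDualCertificate_certificateCoeff hN hNm hmN hX h hv⟩

end DualCertificate

section Pairing

variable {m n R S : ℕ}

lemma norm2_eq_norm (x : Fin n → ℂ) : norm2 x = ‖(WithLp.toLp 2 x : EuclideanSpace ℂ (Fin n))‖ :=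
  (EuclideanSpace.norm_eq _).symm

lemma norm2_sub_rev (x y : Fin n → ℂ) : norm2 (x - y) = norm2 (y - x) := by
  simp only [norm2_eq_norm, WithLp.toLp_sub, norm_sub_rev]

lemma norm2_sub_le (x y z : Fin n → ℂ) : norm2 (x - z) ≤ norm2 (x - y) + norm2 (y - z) := by
  simp only [norm2_eq_norm, WithLp.toLp_sub]
  exact norm_sub_le_norm_sub_add_norm_sub _ _ _

lemma norm_sum_mul_le_norm2 {c : Fin n → ℂ} (hc : ∑ k, ‖c k‖ ^ 2 ≤ 1) (y : Fin n → ℂ) :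
    ‖∑ k, c k * y k‖ ≤ norm2 y :=
  calc ‖∑ k, c k * y k‖ ≤ ∑ k, ‖c k‖ * ‖y k‖ :=
        (norm_sum_le _ _).trans_eq (Finset.sum_congr rfl fun _ _ => norm_mul _ _)
    _ ≤ √(∑ k, ‖c k‖ ^ 2) * √(∑ k, ‖y k‖ ^ 2) := Real.sum_mul_le_sqrt_mul_sqrt _ _ _
    _ ≤ norm2 y := mul_le_of_le_one_left (Real.sqrt_nonneg _) (Real.sqrt_le_one.2 hc)

lemma sum_mul_trigPoly (c : Fin m → ℂ) (a : Fin R → ℂ) (t : Fin R → ℝ) :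
    ∑ j, a j * trigPoly c (t j) = ∑ k, c k * fourierCoeffs m a t k := by
  simp_rw [trigPoly, fourierCoeffs, exp_eq_phase_pow, Finset.mul_sum]
  rw [Finset.sum_comm]
  simp only [mul_left_comm]

lemma norm_sum_mul_trigPoly_sub_le {c : Fin m → ℂ} (hc : ∑ k, ‖c k‖ ^ 2 ≤ 1) (a : Fin R → ℂ)
    (t : Fin R → ℝ) (b : Fin S → ℂ) (s : Fin S → ℝ) :
    ‖∑ j, a j * trigPoly c (t j) - ∑ k, b k * trigPoly c (s k)‖ ≤
      norm2 (fourierCoeffs m a t - fourierCoeffs m b s) := by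
  simp_rw [sum_mul_trigPoly, ← Finset.sum_sub_distrib, ← mul_sub]
  exact norm_sum_mul_le_norm2 hc _

end Pairing

section NearFar

variable {m R S : ℕ} {t : Fin R → ℝ} {s : Fin S → ℝ} {j : Fin R} {k : Fin S}

lemma mem_nearIdx : k ∈ nearIdx t s m j ↔ distT (t j - s k) ≤ 0.3298 / (m - 1) := by
  simp only [nearIdx, Finset.mem_filter_univ]

lemma mem_farIdx : k ∈ farIdx t s m ↔ ∀ j, 0.3298 / (m - 1) < distT (t j - s k) := by
  simp only [farIdx, Finset.mem_filter_univ, mem_nearIdx, not_le]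

lemma NodesSeparated.disjoint_nearIdx (ht : NodesSeparated m t) (hm : 1 < m) {i : Fin R}
    (hij : i ≠ j) : Disjoint (nearIdx t s m i) (nearIdx t s m j) := by
  refine Finset.disjoint_left.2 fun k hi hj => ?_
  rw [mem_nearIdx] at hi hj
  have hm₁ : (0 : ℝ) < m - 1 := sub_pos.2 (by exact_mod_cast hm)
  have htriangle := distT_sub_le (t i) (s k) (t j)
  rw [distT_sub_comm (s k)] at htriangle
  have hlt : 0.3298 / ((m : ℝ) - 1) + 0.3298 / (m - 1) < 4 / (m - 1) := by
    rw [← add_div]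
    gcongr
    norm_num
  linarith [ht i j hij]

lemma NodesSeparated.sum_near_add_sum_far {E : Type*} [AddCommMonoid E]
    (ht : NodesSeparated m t) (hm : 1 < m) (f : Fin S → E) :
    ∑ j, ∑ k ∈ nearIdx t s m j, f k + ∑ k ∈ farIdx t s m, f k = ∑ k, f k := by
  classical
  have hfar : farIdx t s m = (Finset.univ.biUnion (nearIdx t s m))ᶜ := by
    ext k
    simp [farIdx]
  rw [hfar, ← Finset.sum_biUnion fun i _ j _ hij => ht.disjoint_nearIdx hm hij,
    Finset.sum_add_sum_compl]

/-- The first moment, about the nodes `t`, of the part of `∑ k, |b k| δ_{s k}` near them. -/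
def nearMoment (t : Fin R → ℝ) (b : Fin S → ℂ) (s : Fin S → ℝ) (m : ℕ) : ℝ :=
  ∑ j, ∑ k ∈ nearIdx t s m j, ‖b k‖ * distT (t j - s k)

lemma sum_nearIdx_le_nearMoment (b : Fin S → ℂ) (j : Fin R) :
    ∑ k ∈ nearIdx t s m j, ‖b k‖ * distT (t j - s k) ≤ nearMoment t b s m :=
  Finset.single_le_sum (f := fun j => ∑ k ∈ nearIdx t s m j, ‖b k‖ * distT (t j - s k))
    (fun _ _ => Finset.sum_nonneg fun _ _ => mul_nonneg (norm_nonneg _) (distT_nonneg _))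
    (Finset.mem_univ j)

lemma E2_nonneg (a : Fin R → ℂ) (t : Fin R → ℝ) (b : Fin S → ℂ) (s : Fin S → ℝ) (m : ℕ) :
    0 ≤ E2 a t b s m :=
  Finset.sum_nonneg fun _ _ => Finset.sum_nonneg fun _ _ => by positivity

lemma E3_nonneg (a : Fin R → ℂ) (t : Fin R → ℝ) (b : Fin S → ℂ) (s : Fin S → ℝ) (m : ℕ) :
    0 ≤ E3 a t b s m :=
  Finset.sum_nonneg fun _ _ => norm_nonneg _

lemma NodesSeparated.nearMoment_sq_le (ht : NodesSeparated m t) (hm : 1 < m) (a : Fin R → ℂ)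
    (b : Fin S → ℂ) : nearMoment t b s m ^ 2 ≤ tvNorm b * E2 a t b s m := by
  have hmass : ∑ j, ∑ k ∈ nearIdx t s m j, ‖b k‖ ≤ tvNorm b := by
    rw [tvNorm, ← ht.sum_near_add_sum_far (s := s) hm]
    exact le_add_of_nonneg_right (E3_nonneg a t b s m)
  refine le_trans ?_ (mul_le_mul_of_nonneg_right hmass (E2_nonneg a t b s m))
  rw [nearMoment, E2, Finset.sum_sigma', Finset.sum_sigma', Finset.sum_sigma']
  exact Finset.sum_sq_le_sum_mul_sum_of_sq_le_mul _ (fun _ _ => norm_nonneg _)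
    (fun _ _ => by positivity) fun _ _ => (by ring : _ = _).le

end NearFar

section Recovery

variable {m R S : ℕ} {a : Fin R → ℂ} {t : Fin R → ℝ} {b : Fin S → ℂ} {s : Fin S → ℝ} {ε A : ℝ}

lemma exists_norm_le_one_mul_eq_norm (z : ℂ) : ∃ v : ℂ, ‖v‖ ≤ 1 ∧ z * v = ‖z‖ := by
  refine ⟨starRingEnd ℂ z / ‖z‖, ?_, ?_⟩
  · simpa using div_self_le_one ‖z‖
  · rw [← mul_div_assoc, Complex.mul_conj', sq, mul_self_div_self]

lemma NodesSeparated.weighted_E2_add_E3_le (ht : NodesSeparated m t) (hm : 257 ≤ m)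
    (hF : norm2 (fourierCoeffs m a t - fourierCoeffs m b s) ≤ ε) (htv : tvNorm b ≤ tvNorm a) :
    m ^ 2 / 50 * E2 a t b s m + 0.003 * E3 a t b s m ≤ ε := by
  choose v hv hav using fun j => exists_norm_le_one_mul_eq_norm (a j)
  obtain ⟨c, hc⟩ := exists_isDualCertificate hm ht hv
  have hgap : ∑ k, ‖b k‖ * (1 - ‖trigPoly c (s k)‖) ≤ ε := by
    have hpairing := (norm_sum_mul_trigPoly_sub_le hc.sum_sq_le a t b s).trans hF
    simp only [hc.trigPoly_node, hav] at hpairing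
    have ha : ‖∑ j, (‖a j‖ : ℂ)‖ = tvNorm a := by
      rw [← Complex.ofReal_sum, Complex.norm_of_nonneg (by positivity), tvNorm]
    have hb : ‖∑ k, b k * trigPoly c (s k)‖ ≤ ∑ k, ‖b k‖ * ‖trigPoly c (s k)‖ :=
      (norm_sum_le _ _).trans_eq (Finset.sum_congr rfl fun _ _ => norm_mul _ _)
    simp only [mul_sub, mul_one, Finset.sum_sub_distrib]
    change tvNorm b - _ ≤ ε
    linarith [norm_sub_norm_le (∑ j, (‖a j‖ : ℂ)) (∑ k, b k * trigPoly c (s k))]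
  rw [← ht.sum_near_add_sum_far (s := s) (by lia)] at hgap
  refine (add_le_add ?_ ?_).trans hgap
  · simp only [E2, Finset.mul_sum]
    refine Finset.sum_le_sum fun j _ => Finset.sum_le_sum fun k hk => ?_
    rw [mul_left_comm]
    gcongr
    linarith [hc.norm_near_le j _ (mem_nearIdx.1 hk)]
  · simp only [E3, Finset.mul_sum]
    refine Finset.sum_le_sum fun k hk => ?_
    rw [mul_comm]
    gcongr
    linarith [hc.norm_far_le _ (mem_farIdx.1 hk)]

lemma NodesSeparated.E2_le (ht : NodesSeparated m t) (hm : 257 ≤ m)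
    (hF : norm2 (fourierCoeffs m a t - fourierCoeffs m b s) ≤ ε) (htv : tvNorm b ≤ tvNorm a) :
    E2 a t b s m ≤ 50 * ε / m ^ 2 := by
  have : 0 < m := by lia
  rw [le_div_iff₀ (by positivity)]
  linarith [ht.weighted_E2_add_E3_le hm hF htv, E3_nonneg a t b s m]

lemma NodesSeparated.E3_le (ht : NodesSeparated m t) (hm : 257 ≤ m)
    (hF : norm2 (fourierCoeffs m a t - fourierCoeffs m b s) ≤ ε) (htv : tvNorm b ≤ tvNorm a) :
    E3 a t b s m ≤ 500 * ε := by
  have hE2 : 0 ≤ m ^ 2 / 50 * E2 a t b s m := mul_nonneg (by positivity) (E2_nonneg a t b s m)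
  linarith [ht.weighted_E2_add_E3_le hm hF htv, E3_nonneg a t b s m]

lemma NodesSeparated.mul_nearMoment_le (ht : NodesSeparated m t) (hm : 257 ≤ m)
    (hF : norm2 (fourierCoeffs m a t - fourierCoeffs m b s) ≤ ε) (htv : tvNorm b ≤ tvNorm a)
    (ha : tvNorm a ≤ 4 * A) : m * nearMoment t b s m ≤ 15 * √(A * ε) := by
  have : 0 < m := by lia
  have hA : 0 ≤ tvNorm b := Finset.sum_nonneg fun _ _ => norm_nonneg _
  have : 0 ≤ ε := (Real.sqrt_nonneg _).trans hF
  have hsq : (m * nearMoment t b s m) ^ 2 ≤ 200 * (A * ε) := by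
    calc (m * nearMoment t b s m) ^ 2 ≤ m ^ 2 * (4 * A * (50 * ε / m ^ 2)) := by
          rw [mul_pow]
          gcongr
          exact (ht.nearMoment_sq_le (by lia) a b).trans
            (mul_le_mul (htv.trans ha) (ht.E2_le hm hF htv) (E2_nonneg a t b s m) (by linarith))
      _ = 200 * (A * ε) := by field_simp; ring
  refine (Real.le_sqrt_of_sq_le hsq).trans ?_
  rw [Real.sqrt_mul (by norm_num)]
  gcongr
  exact (Real.sqrt_le_left (by norm_num)).2 (by norm_num)

lemma NodesSeparated.exists_isolating_trigPoly (ht : NodesSeparated m t) (hm : 257 ≤ m)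
    (j : Fin R) :
    ∃ c : Fin m → ℂ, ∑ k, ‖c k‖ ^ 2 ≤ 1 ∧
      (∀ i, trigPoly c (t i) = (Pi.single j 1 : Fin R → ℂ) i) ∧
      (∀ x, ‖trigPoly c x‖ ≤ 1) ∧ ∀ i x, distT (t i - x) ≤ 0.3298 / (m - 1) →
        ‖trigPoly c x - (Pi.single j 1 : Fin R → ℂ) i‖ ≤ 30 * m * distT (t i - x) := by
  obtain ⟨c, hc⟩ := exists_isDualCertificate (v := 1) hm ht fun _ => by simp
  obtain ⟨d, hd⟩ := exists_isDualCertificate (v := 2 * Pi.single j 1 - 1) hm ht fun i => by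
    rcases eq_or_ne i j with rfl | hij
    · norm_num
    · simp [hij]
  have htrig (x : ℝ) :
      trigPoly (fun k => (c k + d k) / 2) x = (trigPoly c x + trigPoly d x) / 2 := by
    simp only [trigPoly, ← Finset.sum_add_distrib, Finset.sum_div]
    exact Finset.sum_congr rfl fun _ _ => by ring
  have hhalf {z w : ℂ} {r : ℝ} (hz : ‖z‖ ≤ r) (hw : ‖w‖ ≤ r) : ‖(z + w) / 2‖ ≤ r := by
    rw [norm_div, Complex.norm_ofNat]
    linarith [norm_add_le z w]
  refine ⟨fun k => (c k + d k) / 2, ?_, fun i => ?_, fun x => ?_, fun i x hx => ?_⟩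
  · calc ∑ k, ‖(c k + d k) / 2‖ ^ 2 ≤ ∑ k, (‖c k‖ ^ 2 + ‖d k‖ ^ 2) / 2 := by
          refine Finset.sum_le_sum fun k _ => ?_
          rw [norm_div, Complex.norm_ofNat, div_pow]
          nlinarith [parallelogram_law_with_norm ℝ (c k) (d k), sq_nonneg ‖c k - d k‖]
      _ ≤ 1 := by
          rw [← Finset.sum_div, Finset.sum_add_distrib]
          linarith [hc.sum_sq_le, hd.sum_sq_le]
  · rw [htrig, hc.trigPoly_node, hd.trigPoly_node]
    simp
  · rw [htrig]
    exact hhalf (hc.norm_le_one x) (hd.norm_le_one x)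
  · rw [htrig]
    convert hhalf (hc.norm_sub_node_le i x hx) (hd.norm_sub_node_le i x hx) using 2
    simp only [Pi.sub_apply, Pi.mul_apply, Pi.ofNat_apply]
    ring

lemma NodesSeparated.norm_sub_sum_near_le (ht : NodesSeparated m t) (hm : 257 ≤ m)
    (hF : norm2 (fourierCoeffs m a t - fourierCoeffs m b s) ≤ ε) (j : Fin R) :
    ‖a j - ∑ k ∈ nearIdx t s m j, b k‖ ≤
      ε + 30 * m * nearMoment t b s m + E3 a t b s m := by
  classical
  obtain ⟨c, hc, hnode, hle, hnear⟩ := ht.exists_isolating_trigPoly hm j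
  have hpairing := (norm_sum_mul_trigPoly_sub_le hc a t b s).trans hF
  have ha : ∑ i, a i * trigPoly c (t i) = a j := by simp [hnode, Pi.single_apply]
  have hb : ∑ i, ∑ k ∈ nearIdx t s m i, b k * (Pi.single j 1 : Fin R → ℂ) i =
      ∑ k ∈ nearIdx t s m j, b k := by
    simp [Pi.single_apply]
  have hsplit : a j - ∑ k ∈ nearIdx t s m j, b k =
      (∑ i, a i * trigPoly c (t i) - ∑ k, b k * trigPoly c (s k)) +
        ∑ i, ∑ k ∈ nearIdx t s m i, b k * (trigPoly c (s k) - (Pi.single j 1 : Fin R → ℂ) i) +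
        ∑ k ∈ farIdx t s m, b k * trigPoly c (s k) := by
    rw [← ht.sum_near_add_sum_far (s := s) (by lia) (fun k => b k * trigPoly c (s k)), ha]
    simp only [mul_sub, Finset.sum_sub_distrib, hb]
    ring
  rw [hsplit]
  refine norm_add₃_le.trans (add_le_add (add_le_add hpairing ?_) ?_)
  · simp only [nearMoment, Finset.mul_sum]
    refine norm_sum_le_of_le _ fun i _ => norm_sum_le_of_le _ fun k hk => ?_
    rw [norm_mul, mul_left_comm]
    gcongr
    exact hnear i _ (mem_nearIdx.1 hk)
  · refine norm_sum_le_of_le _ fun k _ => ?_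
    rw [norm_mul]
    exact mul_le_of_le_one_right (norm_nonneg _) (hle _)

end Recovery

section WeightFunction

variable {β : ℝ} {n lam m R : ℕ}

section GeomSum

variable {𝕜 : Type*} [NormedField 𝕜] {r : 𝕜} {ρ : ℝ}

lemma geom_sum_le_inv_one_sub (hρ₀ : 0 ≤ ρ) (hρ : ρ < 1) (n : ℕ) :
    ∑ k ∈ Finset.range n, ρ ^ k ≤ (1 - ρ)⁻¹ := by
  rw [← tsum_geometric_of_lt_one hρ₀ hρ]
  exact (summable_geometric_of_lt_one hρ₀ hρ).sum_le_tsum _ fun _ _ => by positivity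

lemma norm_geom_sum_le (hr : ‖r‖ ≤ ρ) (hρ : ρ < 1) (n : ℕ) :
    ‖∑ k ∈ Finset.range n, r ^ k‖ ≤ (1 - ρ)⁻¹ := by
  refine (norm_sum_le_of_le _ fun k _ => ?_).trans
    (geom_sum_le_inv_one_sub ((norm_nonneg r).trans hr) hρ n)
  rw [norm_pow]
  gcongr

lemma le_norm_geom_sum (hr : ‖r‖ ≤ ρ) (hρ : ρ < 1) (hn : 1 ≤ n) :
    (1 - ρ) / (1 + ρ) ≤ ‖∑ k ∈ Finset.range n, r ^ k‖ := by
  have hρ₀ : 0 ≤ ρ := (norm_nonneg r).trans hr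
  have hpow : ‖r ^ n‖ ≤ ρ := by
    rw [norm_pow]
    exact (pow_le_of_le_one (norm_nonneg _) (hr.trans hρ.le) (by lia)).trans hr
  rw [div_le_iff₀' (by positivity)]
  calc 1 - ρ ≤ ‖(1 : 𝕜)‖ - ‖r ^ n‖ := by rw [norm_one]; gcongr
    _ ≤ ‖1 - r ^ n‖ := norm_sub_norm_le _ _
    _ = ‖1 - r‖ * ‖∑ k ∈ Finset.range n, r ^ k‖ := by rw [← mul_neg_geom_sum, norm_mul]
    _ ≤ (1 + ρ) * ‖∑ k ∈ Finset.range n, r ^ k‖ := by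
        gcongr
        exact (norm_sub_le _ _).trans (by rw [norm_one]; gcongr)

end GeomSum

lemma wFun_eq_geom_sum (β : ℝ) (lam : ℕ) (x : ℝ) :
    wFun β lam x = ∑ k ∈ Finset.range lam, ((β : ℂ)⁻¹ * phase x) ^ k := by
  simp_rw [wFun, exp_eq_phase_pow, mul_pow]

lemma norm_inv_ofReal_le (hβ : 4 / 3 ≤ β) : ‖(β : ℂ)⁻¹‖ ≤ 3 / 4 := by
  rw [norm_inv, Complex.norm_of_nonneg (by linarith)]
  exact (inv_anti₀ (by norm_num) hβ).trans_eq (by norm_num)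

lemma norm_inv_mul_phase_le (hβ : 4 / 3 ≤ β) (x : ℝ) : ‖(β : ℂ)⁻¹ * phase x‖ ≤ 3 / 4 := by
  rw [norm_mul, norm_phase, mul_one]
  exact norm_inv_ofReal_le hβ

lemma norm_wFun_le (hβ : 4 / 3 ≤ β) (lam : ℕ) (x : ℝ) : ‖wFun β lam x‖ ≤ 4 := by
  rw [wFun_eq_geom_sum]
  exact (norm_geom_sum_le (norm_inv_mul_phase_le hβ x) (by norm_num) lam).trans_eq (by norm_num)

lemma le_norm_wFun (hβ : 4 / 3 ≤ β) (hlam : 1 ≤ lam) (x : ℝ) : 1 / 7 ≤ ‖wFun β lam x‖ := by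
  rw [wFun_eq_geom_sum]
  exact le_trans (by norm_num) (le_norm_geom_sum (norm_inv_mul_phase_le hβ x) (by norm_num) hlam)

lemma distT_natCast_mul_le (k : ℕ) (x : ℝ) : distT (k * x) ≤ k * distT x := by
  simpa only [distT_eq_norm, ← nsmul_eq_mul, AddCircle.coe_nsmul] using
    norm_nsmul_le (a := (x : UnitAddCircle)) (n := k)

lemma norm_phase_sub_phase_le (x y : ℝ) : ‖phase x - phase y‖ ≤ 2 * π * distT (x - y) := by
  obtain ⟨n, hn⟩ := exists_int_abs_sub_eq_distT y x
  rw [distT_sub_comm, ← hn, ← phase_sub_intCast x n]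
  have hfactor : phase (x - n) - phase y = phase y * (phase (x - n - y) - 1) := by
    rw [mul_sub, ← phase_add, mul_one, add_sub_cancel]
  rw [hfactor, norm_mul, norm_phase, one_mul]
  exact norm_phase_sub_one_le _

lemma norm_wFun_sub_wFun_le (hβ : 4 / 3 ≤ β) (lam : ℕ) (x y : ℝ) :
    ‖wFun β lam x - wFun β lam y‖ ≤ 26 * lam * distT (x - y) := by
  have hterm (k : ℕ) (hk : k ∈ Finset.range lam) :
      ‖((β : ℂ)⁻¹ * phase x) ^ k - ((β : ℂ)⁻¹ * phase y) ^ k‖ ≤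
        (3 / 4) ^ k * (6.5 * (lam * distT (x - y))) := by
    have hk' : (k : ℝ) ≤ lam := by exact_mod_cast (Finset.mem_range.1 hk).le
    rw [mul_pow, mul_pow, ← mul_sub, norm_mul, norm_pow, phase_pow, phase_pow]
    gcongr
    · exact norm_inv_ofReal_le hβ
    · calc ‖phase (k * x) - phase (k * y)‖ ≤ 2 * π * distT (k * (x - y)) := by
            rw [mul_sub]
            exact norm_phase_sub_phase_le _ _
        _ ≤ 6.5 * (lam * distT (x - y)) := by
            have hd := distT_nonneg (x - y)
            refine mul_le_mul (by linarith [Real.pi_lt_d2]) ?_ (distT_nonneg _) (by norm_num)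
            exact (distT_natCast_mul_le _ _).trans (by gcongr)
  have hd : 0 ≤ 6.5 * (lam * distT (x - y)) := by
    have := distT_nonneg (x - y)
    positivity
  rw [wFun_eq_geom_sum, wFun_eq_geom_sum, ← Finset.sum_sub_distrib]
  refine (norm_sum_le_of_le _ hterm).trans ?_
  rw [← Finset.sum_mul]
  have hgeom := geom_sum_le_inv_one_sub (ρ := 3 / 4) (by norm_num) (by norm_num) lam
  linarith [mul_le_mul_of_nonneg_right hgeom hd]

lemma Vmat_finProdFinEquiv (β : ℝ) (i j : Fin m) (k : Fin lam) :
    Vmat β m lam i (finProdFinEquiv (k, j)) = if j = i then (β : ℂ)⁻¹ ^ (k : ℕ) else 0 := by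
  have hm : 0 < m := j.pos
  simp only [Vmat, Matrix.of_apply, finProdFinEquiv_apply_val, Nat.add_mul_mod_self_left,
    Nat.mod_eq_of_lt j.2, Nat.add_mul_div_left _ _ hm, Nat.div_eq_of_lt j.2, zero_add, Fin.ext_iff]

lemma Vmat_mulVec_fourierCoeffs (β : ℝ) (m lam : ℕ) (a : Fin R → ℂ) (t : Fin R → ℝ) :
    (Vmat β m lam).mulVec (fourierCoeffs (lam * m) a t) =
      fourierCoeffs m (fun j => a j * wFun β lam (m * t j)) t := by
  funext i
  rw [Matrix.mulVec, dotProduct, ← finProdFinEquiv.sum_comp, Fintype.sum_prod_type]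
  simp only [Vmat_finProdFinEquiv, ite_mul, zero_mul, Finset.sum_ite_eq', Finset.mem_univ, if_true]
  simp only [fourierCoeffs, exp_eq_phase_pow, wFun_eq_geom_sum, finProdFinEquiv_apply_val,
    Finset.mul_sum, Finset.sum_mul]
  rw [Finset.sum_comm]
  refine Finset.sum_congr rfl fun j _ => ?_
  rw [← Fin.sum_univ_eq_sum_range
    (fun k => a j * ((β : ℂ)⁻¹ * phase (m * t j)) ^ k * phase (t j) ^ (i : ℕ))]
  refine Finset.sum_congr rfl fun k _ => ?_
  rw [mul_pow, pow_add, pow_mul, phase_pow (t j) m]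
  ring

end WeightFunction

section Reweighting

variable {m R S : ℕ} {a : Fin R → ℂ} {t : Fin R → ℝ} {b : Fin S → ℂ} {s : Fin S → ℝ}
  {W : ℝ → ℂ} {C L : ℝ}

lemma tvNorm_mul_le {w : Fin R → ℂ} (hw : ∀ j, ‖w j‖ ≤ C) (a : Fin R → ℂ) :
    tvNorm (fun j => a j * w j) ≤ C * tvNorm a := by
  rw [tvNorm, tvNorm, Finset.mul_sum]
  refine Finset.sum_le_sum fun j _ => ?_
  rw [norm_mul, mul_comm]
  gcongr
  exact hw j

lemma norm_div_le_of_inv_le (hC : 0 < C) {w : ℂ} (hw : C⁻¹ ≤ ‖w‖) (z : ℂ) :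
    ‖z / w‖ ≤ C * ‖z‖ := by
  rw [norm_div, div_eq_inv_mul]
  gcongr
  exact inv_le_of_inv_le₀ hC hw

lemma E2_div_le (hC : 0 < C) (hW : ∀ x, C⁻¹ ≤ ‖W x‖) (a : Fin R → ℂ) (t : Fin R → ℝ)
    (b : Fin S → ℂ) (s : Fin S → ℝ) (m : ℕ) :
    E2 a t (fun k => b k / W (s k)) s m ≤ C * E2 a t b s m := by
  simp only [E2, Finset.mul_sum]
  refine Finset.sum_le_sum fun j _ => Finset.sum_le_sum fun k _ => ?_
  rw [← mul_assoc]
  gcongr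
  exact norm_div_le_of_inv_le hC (hW _) _

lemma E3_div_le (hC : 0 < C) (hW : ∀ x, C⁻¹ ≤ ‖W x‖) (a : Fin R → ℂ) (t : Fin R → ℝ)
    (b : Fin S → ℂ) (s : Fin S → ℝ) (m : ℕ) :
    E3 a t (fun k => b k / W (s k)) s m ≤ C * E3 a t b s m := by
  simp only [E3, Finset.mul_sum]
  exact Finset.sum_le_sum fun k _ => norm_div_le_of_inv_le hC (hW _) _

lemma norm_sub_sum_near_div_le (hC : 0 < C) (hW : ∀ x, C⁻¹ ≤ ‖W x‖)
    (hL : LipBnd W L) (hL₀ : 0 ≤ L) (j : Fin R) :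
    ‖a j - ∑ k ∈ nearIdx t s m j, b k / W (s k)‖ ≤
      C * ‖a j * W (t j) - ∑ k ∈ nearIdx t s m j, b k‖ + C * (C * L) * nearMoment t b s m := by
  have hW₀ (x : ℝ) : W x ≠ 0 := norm_pos_iff.1 ((inv_pos.2 hC).trans_le (hW x))
  have hsplit : a j - ∑ k ∈ nearIdx t s m j, b k / W (s k) =
      (a j * W (t j) - ∑ k ∈ nearIdx t s m j, b k) / W (t j) +
        ∑ k ∈ nearIdx t s m j, b k * (W (s k) - W (t j)) / W (s k) / W (t j) := by
    rw [sub_div, mul_div_cancel_right₀ _ (hW₀ _), Finset.sum_div, sub_add, ← Finset.sum_sub_distrib]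
    congr 1
    refine Finset.sum_congr rfl fun k _ => ?_
    have := hW₀ (s k)
    have := hW₀ (t j)
    field_simp
    ring
  rw [hsplit]
  refine (norm_add_le _ _).trans (add_le_add (norm_div_le_of_inv_le hC (hW _) _) ?_)
  calc ‖∑ k ∈ nearIdx t s m j, b k * (W (s k) - W (t j)) / W (s k) / W (t j)‖
      ≤ ∑ k ∈ nearIdx t s m j, C * (C * L) * (‖b k‖ * distT (t j - s k)) := by
        refine norm_sum_le_of_le _ fun k _ => ?_
        refine (norm_div_le_of_inv_le hC (hW _) _).trans ?_
        rw [mul_assoc]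
        gcongr
        refine (norm_div_le_of_inv_le hC (hW _) _).trans ?_
        rw [mul_assoc, norm_mul, mul_left_comm L, distT_sub_comm]
        gcongr
        exact hL _ _
    _ ≤ C * (C * L) * nearMoment t b s m := by
        rw [← Finset.mul_sum]
        gcongr
        exact sum_nearIdx_le_nearMoment b j

end Reweighting

section WeightedRecovery

variable {m lam R S : ℕ} {β ε A : ℝ} {a : Fin R → ℂ} {t : Fin R → ℝ} {b : Fin S → ℂ}
  {s : Fin S → ℝ}

lemma lipBnd_wFun_natCast_mul (hβ : 4 / 3 ≤ β) (lam m : ℕ) :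
    LipBnd (fun x => wFun β lam (m * x)) (26 * lam * m) := fun x y => by
  refine (norm_wFun_sub_wFun_le hβ lam _ _).trans ?_
  rw [← mul_sub, mul_assoc _ (m : ℝ)]
  gcongr
  exact distT_natCast_mul_le m _

lemma inv_seven_le_norm_wFun (hβ : 4 / 3 ≤ β) (hlam : 1 ≤ lam) (m : ℕ) (x : ℝ) :
    7⁻¹ ≤ ‖wFun β lam (m * x)‖ :=
  (one_div (7 : ℝ)).symm.trans_le (le_norm_wFun hβ hlam _)

lemma NodesSeparated.E2_reweight_le (ht : NodesSeparated m t) (hm : 257 ≤ m) (hβ : 4 / 3 ≤ β)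
    (hlam : 1 ≤ lam)
    (hF : norm2 (fourierCoeffs m (fun j => a j * wFun β lam (m * t j)) t -
      fourierCoeffs m b s) ≤ ε)
    (htv : tvNorm b ≤ tvNorm fun j => a j * wFun β lam (m * t j)) :
    E2 a t (fun k => b k / wFun β lam (m * s k)) s m ≤ 350 * ε / m ^ 2 := by
  have hdiv := E2_div_le (by norm_num) (inv_seven_le_norm_wFun hβ hlam m) a t b s m
  refine hdiv.trans ((mul_le_mul_of_nonneg_left (ht.E2_le hm hF htv) (by norm_num)).trans_eq ?_)
  ring

lemma NodesSeparated.E3_reweight_le (ht : NodesSeparated m t) (hm : 257 ≤ m) (hβ : 4 / 3 ≤ β)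
    (hlam : 1 ≤ lam)
    (hF : norm2 (fourierCoeffs m (fun j => a j * wFun β lam (m * t j)) t -
      fourierCoeffs m b s) ≤ ε)
    (htv : tvNorm b ≤ tvNorm fun j => a j * wFun β lam (m * t j)) :
    E3 a t (fun k => b k / wFun β lam (m * s k)) s m ≤ 3500 * ε := by
  have hdiv := E3_div_le (by norm_num) (inv_seven_le_norm_wFun hβ hlam m) a t b s m
  refine hdiv.trans ((mul_le_mul_of_nonneg_left (ht.E3_le hm hF htv) (by norm_num)).trans_eq ?_)
  ring

lemma NodesSeparated.E1_reweight_le (ht : NodesSeparated m t) (hm : 257 ≤ m) (hβ : 4 / 3 ≤ β)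
    (hlam : 1 ≤ lam) (ha : tvNorm a ≤ A)
    (hF : norm2 (fourierCoeffs m (fun j => a j * wFun β lam (m * t j)) t -
      fourierCoeffs m b s) ≤ ε)
    (htv : tvNorm b ≤ tvNorm fun j => a j * wFun β lam (m * t j)) :
    E1 a t (fun k => b k / wFun β lam (m * s k)) s m ≤
      3507 * ε + 22260 * (lam * √(A * ε)) := by
  have hε : 0 ≤ ε := (Real.sqrt_nonneg _).trans hF
  have hlam' : (1 : ℝ) ≤ lam := by exact_mod_cast hlam
  have hmass : tvNorm (fun j => a j * wFun β lam (m * t j)) ≤ 4 * A :=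
    (tvNorm_mul_le (fun j => norm_wFun_le hβ lam _) a).trans (by linarith)
  have hmoment : m * nearMoment t b s m ≤ 15 * √(A * ε) := ht.mul_nearMoment_le hm hF htv hmass
  have hfar := ht.E3_le hm hF htv
  refine Real.iSup_le (fun j => ?_) (by positivity)
  calc ‖a j - ∑ k ∈ nearIdx t s m j, b k / wFun β lam (m * s k)‖
      ≤ 7 * ‖a j * wFun β lam (m * t j) - ∑ k ∈ nearIdx t s m j, b k‖ +
          7 * (7 * (26 * lam * m)) * nearMoment t b s m :=
        norm_sub_sum_near_div_le (by norm_num) (inv_seven_le_norm_wFun hβ hlam m)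
          (lipBnd_wFun_natCast_mul hβ lam m) (by positivity) j
    _ ≤ 7 * (ε + 30 * m * nearMoment t b s m + 500 * ε) +
          7 * (7 * (26 * lam * m)) * nearMoment t b s m := by
        gcongr
        exact (ht.norm_sub_sum_near_le hm hF j).trans (add_le_add_right hfar _)
    _ = 3507 * ε + (210 + 1274 * lam) * (m * nearMoment t b s m) := by ring
    _ ≤ 3507 * ε + (210 + 1274 * lam) * (15 * √(A * ε)) := by gcongr
    _ ≤ 3507 * ε + (210 * lam + 1274 * lam) * (15 * √(A * ε)) := by
        gcongr
        linarith
    _ = 3507 * ε + 22260 * (lam * √(A * ε)) := by ring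

end WeightedRecovery

section Parameters

variable {K lam m : ℕ} {A ε : ℝ}

lemma four_thirds_le_mul_div (hK : 2 ≤ K) (hlam : 1 ≤ lam) :
    4 / 3 ≤ (K : ℝ) * (lam + 1) / (lam + 2) := by
  have hK' : (2 : ℝ) ≤ K := by exact_mod_cast hK
  have hlam' : (1 : ℝ) ≤ lam := by exact_mod_cast hlam
  rw [le_div_iff₀ (by positivity)]
  nlinarith

lemma add_three_div_add_two_pow_le_three (n : ℕ) : (((n : ℝ) + 3) / (n + 2)) ^ n ≤ 3 :=
  calc (((n : ℝ) + 3) / (n + 2)) ^ n = (1 + ((n + 2 : ℕ) : ℝ)⁻¹) ^ n := by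
        congr 1
        push_cast
        field_simp
        ring
    _ ≤ (1 + ((n + 2 : ℕ) : ℝ)⁻¹) ^ (n + 2) :=
        pow_le_pow_right₀ (le_add_of_nonneg_right (by positivity)) (by lia)
    _ ≤ Real.exp 1 := Real.one_add_inv_pow_le_exp
    _ ≤ 3 := Real.exp_one_lt_three.le

/-- The quantity `M^{1/2} λ^{1/2} K^{-λ}` governing all error bounds, where `M = λ m`. -/
def errorRate (K lam m : ℕ) : ℝ :=
  ((lam * m : ℕ) : ℝ) ^ ((1 : ℝ) / 2) * (lam : ℝ) ^ ((1 : ℝ) / 2) * (K : ℝ) ^ (-(lam : ℝ))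

lemma errorRate_nonneg (K lam m : ℕ) : 0 ≤ errorRate K lam m := by
  rw [errorRate]
  positivity

lemma errorRate_eq (K lam m : ℕ) : errorRate K lam m = √m * lam * (K : ℝ) ^ (-(lam : ℝ)) := by
  rw [errorRate, ← Real.sqrt_eq_rpow, ← Real.sqrt_eq_rpow, Nat.cast_mul,
    Real.sqrt_mul (Nat.cast_nonneg _), mul_comm √(lam : ℝ), mul_assoc √(m : ℝ),
    Real.mul_self_sqrt (Nat.cast_nonneg _)]

lemma mul_sqrt_errorRate (hlam : 1 ≤ lam) :
    lam * √(errorRate K lam m) =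
      ((lam * m : ℕ) : ℝ) ^ ((1 : ℝ) / 4) * (lam : ℝ) ^ ((5 : ℝ) / 4) *
        (K : ℝ) ^ (-(lam : ℝ) / 2) := by
  have hlam' : (0 : ℝ) < lam := by exact_mod_cast hlam
  have hsplit : (lam : ℝ) ^ ((5 : ℝ) / 4) = lam * (lam : ℝ) ^ ((1 : ℝ) / 4) := by
    rw [← Real.rpow_one_add' hlam'.le (by norm_num)]
    norm_num
  rw [errorRate, Real.sqrt_eq_rpow, Real.mul_rpow (by positivity) (by positivity),
    Real.mul_rpow (by positivity) (by positivity), ← Real.rpow_mul (by positivity),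
    ← Real.rpow_mul (by positivity), ← Real.rpow_mul (by positivity), hsplit]
  ring_nf

lemma noiseLevel_le (hA : 0 ≤ A) (hK : 0 < K) (hlam : 1 ≤ lam) (m : ℕ) :
    √(2 * m) * ((K : ℝ) * (lam + 1) / (lam + 2)) ^ (-((lam : ℤ) - 1)) * ((lam + 2) * A / K) ≤
      13 * A * errorRate K lam m := by
  obtain ⟨n, rfl⟩ := Nat.exists_eq_add_of_le' hlam
  have hK' : (0 : ℝ) < K := by exact_mod_cast hK
  have hsqrt : √2 ≤ 1.42 := (Real.sqrt_le_left (by norm_num)).2 (by norm_num)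
  have hratio : ((K : ℝ) * (((n + 1 : ℕ) : ℝ) + 1) / (((n + 1 : ℕ) : ℝ) + 2)) ^
      (-(((n + 1 : ℕ) : ℤ) - 1)) = (((n : ℝ) + 3) / (n + 2)) ^ n * ((K : ℝ) ^ n)⁻¹ := by
    have hexponent : ((n + 1 : ℕ) : ℤ) - 1 = n := by simp
    rw [hexponent, zpow_neg, zpow_natCast, ← inv_pow, ← inv_pow, ← mul_pow]
    congr 1
    push_cast
    field_simp
    ring
  rw [hratio, errorRate_eq, Real.rpow_neg hK'.le, Real.rpow_natCast, Real.sqrt_mul zero_le_two]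
  calc √2 * √m * ((((n : ℝ) + 3) / (n + 2)) ^ n * ((K : ℝ) ^ n)⁻¹) *
        ((((n + 1 : ℕ) : ℝ) + 2) * A / K)
      ≤ 1.42 * √m * (3 * ((K : ℝ) ^ n)⁻¹) * ((((n + 1 : ℕ) : ℝ) + 2) * A / K) := by
        gcongr
        exact add_three_div_add_two_pow_le_three n
    _ = 4.26 * (n + 3) * (A * √m * ((K : ℝ) ^ (n + 1))⁻¹) := by
        push_cast
        field_simp
        ring
    _ ≤ 13 * (n + 1) * (A * √m * ((K : ℝ) ^ (n + 1))⁻¹) := by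
        refine mul_le_mul_of_nonneg_right ?_ (by positivity)
        linarith [n.cast_nonneg (α := ℝ)]
    _ = 13 * A * (√m * ((n + 1 : ℕ) : ℝ) * ((K : ℝ) ^ (n + 1))⁻¹) := by
        push_cast
        ring

lemma amplitude_bound_le (hA : 0 ≤ A) (hε : ε ≤ 26 * A * errorRate K lam m) :
    3507 * ε + 22260 * (lam * √(A * ε)) ≤
      160000 * A * errorRate K lam m +
        160000 * (1 + errorRate K lam m) ^ ((1 : ℝ) / 2) * A * (lam * √(errorRate K lam m)) := by
  have hX := errorRate_nonneg K lam m
  have hsqrt : √(A * ε) ≤ 6 * A * √(errorRate K lam m) := by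
    refine Real.sqrt_le_iff.2 ⟨by positivity, ?_⟩
    rw [mul_pow, Real.sq_sqrt hX]
    nlinarith [mul_le_mul_of_nonneg_left hε hA, mul_nonneg (sq_nonneg A) hX]
  have hfactor : 1 ≤ (1 + errorRate K lam m) ^ ((1 : ℝ) / 2) :=
    Real.one_le_rpow (by linarith) (by norm_num)
  refine add_le_add (by linarith [mul_nonneg hA hX]) ?_
  calc 22260 * (lam * √(A * ε)) ≤ 22260 * (lam * (6 * A * √(errorRate K lam m))) := by gcongr
    _ = 133560 * 1 * A * (lam * √(errorRate K lam m)) := by ring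
    _ ≤ 160000 * (1 + errorRate K lam m) ^ ((1 : ℝ) / 2) * A *
          (lam * √(errorRate K lam m)) := by
        gcongr
        norm_num

lemma support_bound_le (hA : 0 ≤ A) (hm : 1 ≤ m) (hε : ε ≤ 26 * A * errorRate K lam m) :
    350 * ε / m ^ 2 ≤ 10000 * A * lam * (K : ℝ) ^ (-(lam : ℝ)) := by
  have hm' : (1 : ℝ) ≤ m := by exact_mod_cast hm
  have hsqrt : √(m : ℝ) ≤ m ^ 2 :=
    (Real.sqrt_le_self_iff.2 (.inr hm')).trans (le_self_pow₀ hm' two_ne_zero)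
  rw [errorRate_eq] at hε
  rw [div_le_iff₀ (by positivity)]
  calc 350 * ε ≤ 350 * (26 * A * (√m * lam * (K : ℝ) ^ (-(lam : ℝ)))) := by gcongr
    _ = 9100 * A * lam * (K : ℝ) ^ (-(lam : ℝ)) * √m := by ring
    _ ≤ 10000 * A * lam * (K : ℝ) ^ (-(lam : ℝ)) * m ^ 2 := by
        gcongr
        norm_num

lemma spurious_bound_le (hA : 0 ≤ A) (hε : ε ≤ 26 * A * errorRate K lam m) :
    3500 * ε ≤ 100000 * A * errorRate K lam m := by
  linarith [mul_nonneg hA (errorRate_nonneg K lam m)]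

end Parameters

end

end SuperResolution

/-- Theorem 3.5: reconstruction guarantees for beta-quantization combined
with TV-min, in terms of the errors `𝓔_1^m`, `𝓔_2^m`, `𝓔_3^m`. -/
theorem statement14 :
    ∃ C₁ C₂ C₃ : ℝ, 0 < C₁ ∧ 0 < C₂ ∧ 0 < C₃ ∧
      ∀ (A : ℝ), 0 < A →
      ∀ (K lam m : ℕ), 2 ≤ K → 1 ≤ lam → 257 ≤ m →
      ∀ (β δ εV : ℝ),
        β = (K : ℝ) * ((lam : ℝ) + 1) / ((lam : ℝ) + 2) →
        δ = ((lam : ℝ) + 2) * A / (K : ℝ) →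
        εV = Real.sqrt (2 * (m : ℝ)) * β ^ (-((lam : ℤ) - 1)) * δ →
      ∀ (Δ : ℝ), 4 / ((m : ℝ) - 1) ≤ Δ →
      ∀ (S : ℕ) (a : Fin S → ℂ) (t : Fin S → ℝ),
        (∀ j, t j ∈ Set.Ico (0 : ℝ) 1) → Function.Injective t →
        (∀ j k, j ≠ k → Δ ≤ distT (t j - t k)) →
        tvNorm a ≤ A →
      ∀ (q : Fin (lam * m) → ℂ),
        norm2 ((Vmat β m lam).mulVec (fourierCoeffs (lam * m) a t) -
            (Vmat β m lam).mulVec q) ≤ εV →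
      ∀ (S' : ℕ) (b : Fin S' → ℂ) (s : Fin S' → ℝ),
        (∀ k, s k ∈ Set.Ico (0 : ℝ) 1) → Function.Injective s →
        norm2 ((Vmat β m lam).mulVec q - fourierCoeffs m b s) ≤ εV →
        (∀ (S'' : ℕ) (b' : Fin S'' → ℂ) (s' : Fin S'' → ℝ),
          (∀ k, s' k ∈ Set.Ico (0 : ℝ) 1) → Function.Injective s' →
          norm2 ((Vmat β m lam).mulVec q - fourierCoeffs m b' s') ≤ εV →
          tvNorm b ≤ tvNorm b') →
        E1 a t (fun k => b k / wFun β lam ((m : ℝ) * s k)) s m ≤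
            C₁ * A * ((lam * m : ℕ) : ℝ) ^ ((1 : ℝ) / 2) * (lam : ℝ) ^ ((1 : ℝ) / 2) *
                (K : ℝ) ^ (-(lam : ℝ)) +
              C₁ * (1 + ((lam * m : ℕ) : ℝ) ^ ((1 : ℝ) / 2) * (lam : ℝ) ^ ((1 : ℝ) / 2) *
                  (K : ℝ) ^ (-(lam : ℝ))) ^ ((1 : ℝ) / 2) *
                A * ((lam * m : ℕ) : ℝ) ^ ((1 : ℝ) / 4) * (lam : ℝ) ^ ((5 : ℝ) / 4) *
                (K : ℝ) ^ (-(lam : ℝ) / 2) ∧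
        E2 a t (fun k => b k / wFun β lam ((m : ℝ) * s k)) s m ≤
            C₂ * A * (lam : ℝ) * (K : ℝ) ^ (-(lam : ℝ)) ∧
        E3 a t (fun k => b k / wFun β lam ((m : ℝ) * s k)) s m ≤
            C₃ * A * ((lam * m : ℕ) : ℝ) ^ ((1 : ℝ) / 2) * (lam : ℝ) ^ ((1 : ℝ) / 2) *
              (K : ℝ) ^ (-(lam : ℝ)) := by
  refine ⟨160000, 10000, 100000, by norm_num, by norm_num, by norm_num, ?_⟩
  rintro A hA K lam m hK hlam hm β δ εV rfl rfl rfl Δ hΔ S a t ht htinj hsep ha q hq S' b s - - hb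
    hmin
  rw [SuperResolution.Vmat_mulVec_fourierCoeffs] at hq
  have hnodes : SuperResolution.NodesSeparated m t := fun j k hjk => hΔ.trans (hsep j k hjk)
  have hβ := SuperResolution.four_thirds_le_mul_div hK hlam
  have htv := hmin S _ t ht htinj ((SuperResolution.norm2_sub_rev _ _).trans_le hq)
  have hF := (SuperResolution.norm2_sub_le _ _ _).trans (add_le_add hq hb)
  have hnoise := SuperResolution.noiseLevel_le hA.le (by lia : 0 < K) hlam m
  have hε := (add_le_add hnoise hnoise).trans_eq
    (by ring : _ = 26 * A * SuperResolution.errorRate K lam m)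
  refine ⟨?_, ?_, ?_⟩
  · refine (hnodes.E1_reweight_le hm hβ hlam ha hF htv).trans
      ((SuperResolution.amplitude_bound_le hA.le hε).trans_eq ?_)
    rw [SuperResolution.mul_sqrt_errorRate hlam, SuperResolution.errorRate]
    ring
  · exact (hnodes.E2_reweight_le hm hβ hlam hF htv).trans
      (SuperResolution.support_bound_le hA.le (by lia) hε)
  · refine (hnodes.E3_reweight_le hm hβ hlam hF htv).trans
      ((SuperResolution.spurious_bound_le hA.le hε).trans_eq ?_)
    rw [SuperResolution.errorRate]
    ring
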